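/- arXiv:math/0411327 — 2 statements merged into one kernel-verified Lean document; each statement's English description precedes it below -/
import Mathlib

section
/- Let f: N → N' be an isometric immersion with second fundamental form A and shape operator P, satisfying ⟨P(ξ;X),Y⟩_{TN} = ⟨A(X,Y),ξ⟩_{TN'} for X,Y ∈ Γ(TN), ξ ∈ Γ(T^⊥N). Then, by the Gauss equation, the curvature terms along a map φ: M → N with spinor field ψ satisfy R(φ,ψ) = P(𝒜(dφ(e_α), e_α·ψ); ψ) + R'(φ,ψ), where P(𝒜(dφ(e_α),e_α·ψ);ψ) := P(A(∂_{y^l},∂_{y^j});∂_{y^i}) ⟨ψ^i, e_α·ψ^j⟩ φ^l_α, and R, R' are formed from the curvature tensors of N and N' respectively. -/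
noncomputable section

open MeasureTheory Complex Filter
open scoped ENNReal NNReal

/-- The spinor fiber over a two-dimensional flat (spin) domain. -/
abbrev Spinor : Type := ℂ × ℂ

/-- Clifford multiplication of a vector of `ℝ²` on a spinor; it satisfies
`cl v (cl v s) = -‖v‖² • s` and the skew-adjointness relation
`⟨cl v s, t⟩ = -⟨s, cl v t⟩`. -/
def cl (v : ℝ × ℝ) (s : Spinor) : Spinor :=
  v.1 • ((-s.2 : ℂ), s.1) + v.2 • (Complex.I * s.2, Complex.I * s.1)

/-- The (real) inner product `⟨·,·⟩_{ΣM}` on spinors. -/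
def sInner (s t : Spinor) : ℝ :=
  (s.1 * (starRingEnd ℂ) t.1 + s.2 * (starRingEnd ℂ) t.2).re

/-- Partial derivative in the `x`-direction. -/
def pdx {E : Type*} [NormedAddCommGroup E] [NormedSpace ℝ E] (f : ℝ × ℝ → E) (p : ℝ × ℝ) : E :=
  fderiv ℝ f p (1, 0)

/-- Partial derivative in the `y`-direction. -/
def pdy {E : Type*} [NormedAddCommGroup E] [NormedSpace ℝ E] (f : ℝ × ℝ → E) (p : ℝ × ℝ) : E :=
  fderiv ℝ f p (0, 1)

/-- The (flat) Laplacian `Δ = ∂²/∂x² + ∂²/∂y²`. -/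
def lap {E : Type*} [NormedAddCommGroup E] [NormedSpace ℝ E] (f : ℝ × ℝ → E) (p : ℝ × ℝ) : E :=
  pdx (fun q => pdx f q) p + pdy (fun q => pdy f q) p

/-- The gradient of a real valued function on `ℝ²`. -/
def gradc (f : ℝ × ℝ → ℝ) (p : ℝ × ℝ) : ℝ × ℝ := (pdx f p, pdy f p)

/-- The flat Dirac operator `∂̸ = e₁·∇_{e₁} + e₂·∇_{e₂}` on spinors on `ℝ²`. -/
def diracOp (ψ : ℝ × ℝ → Spinor) (p : ℝ × ℝ) : Spinor :=
  cl (1, 0) (pdx ψ p) + cl (0, 1) (pdy ψ p)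

/-- The energy density `|dφ|²` of a map `φ` with values in `ℝ^K`. -/
def eDen {K : ℕ} (φ : ℝ × ℝ → Fin K → ℝ) (p : ℝ × ℝ) : ℝ :=
  ∑ i, ((pdx (fun q => φ q i) p) ^ 2 + (pdy (fun q => φ q i) p) ^ 2)

/-- The pointwise squared norm `|ψ|²` of a spinor field with values in `ΣM ⊗ ℝ^K`. -/
def psiSq {K : ℕ} (ψ : ℝ × ℝ → Fin K → Spinor) (p : ℝ × ℝ) : ℝ :=
  ∑ i, sInner (ψ p i) (ψ p i)

/-- Partial derivative in the `j`-th coordinate direction on a chart of a target manifold. -/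
def pdN {n : ℕ} (h : (Fin n → ℝ) → ℝ) (y : Fin n → ℝ) (j : Fin n) : ℝ :=
  fderiv ℝ h y (Pi.single j 1)

/-- The Christoffel symbols `Γ^i_{jk}` of the Levi-Civita connection of the metric `g`
(with inverse metric `ginv`). -/
def Γchr {n : ℕ} (g ginv : (Fin n → ℝ) → Fin n → Fin n → ℝ)
    (y : Fin n → ℝ) (i j k : Fin n) : ℝ :=
  (1 / 2) * ∑ l, ginv y i l *
    (pdN (fun z => g z l k) y j + pdN (fun z => g z j l) y k - pdN (fun z => g z j k) y l)

/-- The components `R^m_{lij}` of the Riemann curvature tensor of the metric `g`. -/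
def Riem {n : ℕ} (g ginv : (Fin n → ℝ) → Fin n → Fin n → ℝ)
    (y : Fin n → ℝ) (m l i j : Fin n) : ℝ :=
  pdN (fun z => Γchr g ginv z m j l) y i - pdN (fun z => Γchr g ginv z m i l) y j +
    ∑ p, (Γchr g ginv y m i p * Γchr g ginv y p j l -
          Γchr g ginv y m j p * Γchr g ginv y p i l)

/-- `∂f^a/∂y^i`, the differential of a map `f` between charts of `N` and `N'`. -/
def pdmap {n n' : ℕ} (f : (Fin n → ℝ) → Fin n' → ℝ) (y : Fin n → ℝ) (a : Fin n') (i : Fin n) : ℝ :=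
  fderiv ℝ (fun z => f z a) y (Pi.single i 1)

/-- The second fundamental form `A(X,Y) = (∇_X df)(Y)` of a map `f : N → N'`, evaluated on
the coordinate vector fields: `A(∂_{y^i}, ∂_{y^j})^a`. -/
def sff {n n' : ℕ} (Γ : (Fin n → ℝ) → Fin n → Fin n → Fin n → ℝ)
    (Γ' : (Fin n' → ℝ) → Fin n' → Fin n' → Fin n' → ℝ)
    (f : (Fin n → ℝ) → Fin n' → ℝ) (y : Fin n → ℝ) (i j : Fin n) (a : Fin n') : ℝ :=
  pdN (fun z => pdmap f z a j) y i +
    (∑ b, ∑ c, Γ' (f y) a b c * pdmap f y b i * pdmap f y c j) -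
    ∑ k, Γ y k i j * pdmap f y a k

/-- The ambient curvature of `N'` pulled back along the isometric immersion `f` and raised
with the metric of `N`: `R'^m_{lij} = g^{mk} R'_{abcd}(f) f^a_k f^b_l f^c_i f^d_j`. -/
def RiemPull {n n' : ℕ} (g ginv : (Fin n → ℝ) → Fin n → Fin n → ℝ)
    (g' g'inv : (Fin n' → ℝ) → Fin n' → Fin n' → ℝ)
    (f : (Fin n → ℝ) → Fin n' → ℝ) (y : Fin n → ℝ) (m l i j : Fin n) : ℝ :=
  ∑ k, ginv y m k *
    ∑ a, ∑ b, ∑ c, ∑ d,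
      (∑ e, g' (f y) a e * Riem g' g'inv (f y) e b c d) *
        pdmap f y a k * pdmap f y b l * pdmap f y c i * pdmap f y d j


section GaussAux

lemma pdN_add' {n : ℕ} {u v : (Fin n → ℝ) → ℝ} {y : Fin n → ℝ} (hu : Differentiable ℝ u)
    (hv : Differentiable ℝ v) (i : Fin n) :
    pdN (fun z => u z + v z) y i = pdN u y i + pdN v y i := by
  unfold pdN
  rw [fderiv_fun_add (hu y) (hv y)]; rfl

lemma pdN_mul' {n : ℕ} {u v : (Fin n → ℝ) → ℝ} {y : Fin n → ℝ} (hu : Differentiable ℝ u)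
    (hv : Differentiable ℝ v) (i : Fin n) :
    pdN (fun z => u z * v z) y i = pdN u y i * v y + u y * pdN v y i := by
  unfold pdN
  rw [fderiv_fun_mul (hu y) (hv y)]
  simp only [add_apply, smul_apply, smul_eq_mul]
  ring

lemma pdN_sum' {n : ℕ} {ι : Type*} [Fintype ι] {u : ι → (Fin n → ℝ) → ℝ} {y : Fin n → ℝ}
    (hu : ∀ k, Differentiable ℝ (u k)) (i : Fin n) :
    pdN (fun z => ∑ k, u k z) y i = ∑ k, pdN (u k) y i := by
  unfold pdN
  rw [fderiv_fun_sum (fun k _ => hu k y)]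
  simp

lemma pdN_comp' {n n' : ℕ} {h : (Fin n' → ℝ) → ℝ} {f : (Fin n → ℝ) → Fin n' → ℝ}
    (hh : Differentiable ℝ h) (hf : Differentiable ℝ f) (y : Fin n → ℝ) (i : Fin n) :
    pdN (fun z => h (f z)) y i = ∑ c, pdN h (f y) c * pdmap f y c i := by
  unfold pdN pdmap
  have h1 : fderiv ℝ (fun z => h (f z)) y = (fderiv ℝ h (f y)).comp (fderiv ℝ f y) :=
    fderiv_comp y (hh _) (hf y)
  rw [h1, ContinuousLinearMap.comp_apply]
  have h2 : ∀ c, fderiv ℝ (fun z => f z c) y (Pi.single i 1) = fderiv ℝ f y (Pi.single i 1) c := by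
    intro c
    rw [fderiv_apply (hf y)]; rfl
  simp only [h2]
  set w := fderiv ℝ f y (Pi.single i 1)
  conv_lhs => rw [pi_eq_sum_univ' w]
  rw [map_sum]
  refine Finset.sum_congr rfl fun c _ => ?_
  rw [map_smul, smul_eq_mul, mul_comm]

lemma pdN_smooth {n : ℕ} {u : (Fin n → ℝ) → ℝ} (hu : ContDiff ℝ (⊤ : ℕ∞) u) (i : Fin n) :
    ContDiff ℝ (⊤ : ℕ∞) (fun y => pdN u y i) := by
  unfold pdN
  exact (hu.fderiv_right (m := (⊤ : ℕ∞)) (by simp)).clm_apply contDiff_const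

lemma pdN_comm {n : ℕ} {u : (Fin n → ℝ) → ℝ} (hu : ContDiff ℝ (⊤ : ℕ∞) u) (y : Fin n → ℝ)
    (i j : Fin n) :
    pdN (fun z => pdN u z j) y i = pdN (fun z => pdN u z i) y j := by
  have hd : Differentiable ℝ (fderiv ℝ u) :=
    (hu.fderiv_right (m := (⊤ : ℕ∞)) (by simp)).differentiable (by simp)
  have key : ∀ i j : Fin n, pdN (fun z => pdN u z j) y i =
      fderiv ℝ (fderiv ℝ u) y (Pi.single i 1) (Pi.single j 1) := by
    intro i j
    unfold pdN
    rw [fderiv_clm_apply (hd y) (by fun_prop)]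
    simp
  rw [key, key]
  have hs : IsSymmSndFDerivAt ℝ u y :=
    hu.contDiffAt.isSymmSndFDerivAt (by
      rw [minSmoothness_of_isRCLikeNormedField]
      exact WithTop.coe_le_coe.2 le_top)
  exact hs _ _

lemma ginv_smooth {n : ℕ} {g ginv : (Fin n → ℝ) → Fin n → Fin n → ℝ}
    (hg : ContDiff ℝ (⊤ : ℕ∞) fun y => g y)
    (hinv : ∀ y i j, (∑ k, ginv y i k * g y k j) = if i = j then (1 : ℝ) else 0)
    (i j : Fin n) : ContDiff ℝ (⊤ : ℕ∞) (fun y => ginv y i j) := by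
  have hgc : ∀ i j, ContDiff ℝ (⊤ : ℕ∞) (fun y => g y i j) := by
    intro i j
    exact contDiff_pi.1 (contDiff_pi.1 hg i) j
  have hm : ∀ y, (Matrix.of (ginv y)) * (Matrix.of (g y)) = 1 := by
    intro y
    ext i j
    simp only [Matrix.mul_apply, Matrix.of_apply, hinv, Matrix.one_apply]
  have hdet : ∀ y, (Matrix.of (g y)).det ≠ 0 := by
    intro y h0
    have := congrArg Matrix.det (hm y)
    rw [Matrix.det_mul, h0] at this
    simp at this
  have hgi : ∀ y, ginv y i j =
      ((Matrix.of (g y)).det)⁻¹ * (Matrix.of (g y)).adjugate i j := by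
    intro y
    have : (Matrix.of (g y))⁻¹ = Matrix.of (ginv y) := Matrix.inv_eq_left_inv (hm y)
    have h2 := congrFun (congrFun this i) j
    rw [Matrix.inv_def] at h2
    simp only [Matrix.smul_apply, Ring.inverse_eq_inv', smul_eq_mul, Matrix.of_apply] at h2
    exact h2.symm
  have hdets : ∀ (M : (Fin n → ℝ) → Matrix (Fin n) (Fin n) ℝ),
      (∀ a b, ContDiff ℝ (⊤ : ℕ∞) (fun y => M y a b)) →
      ContDiff ℝ (⊤ : ℕ∞) (fun y => (M y).det) := by
    intro M hM
    simp only [Matrix.det_apply']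
    refine ContDiff.sum fun σ _ => ?_
    exact contDiff_const.mul (contDiff_prod fun a _ => hM _ _)
  simp only [hgi]
  refine ContDiff.mul (ContDiff.inv (hdets _ hgc) hdet) ?_
  simp only [Matrix.adjugate_apply]
  refine hdets _ fun a b => ?_
  by_cases h : a = j
  · subst h; simp only [Matrix.updateRow_self]; exact contDiff_const
  · simp only [Matrix.updateRow_ne h]; exact hgc _ _

lemma Γchr_smooth {n : ℕ} {g ginv : (Fin n → ℝ) → Fin n → Fin n → ℝ}
    (hg : ContDiff ℝ (⊤ : ℕ∞) fun y => g y)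
    (hinv : ∀ y i j, (∑ k, ginv y i k * g y k j) = if i = j then (1 : ℝ) else 0)
    (i j k : Fin n) : ContDiff ℝ (⊤ : ℕ∞) (fun y => Γchr g ginv y i j k) := by
  have hgc : ∀ i j, ContDiff ℝ (⊤ : ℕ∞) (fun y => g y i j) := by
    intro i j
    exact contDiff_pi.1 (contDiff_pi.1 hg i) j
  unfold Γchr
  refine contDiff_const.mul (ContDiff.sum fun l _ => ?_)
  exact (ginv_smooth hg hinv _ _).mul
    (((pdN_smooth (hgc _ _) _).add (pdN_smooth (hgc _ _) _)).sub (pdN_smooth (hgc _ _) _))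

lemma ginv_right {n : ℕ} {g ginv : (Fin n → ℝ) → Fin n → Fin n → ℝ}
    (hinv : ∀ y i j, (∑ k, ginv y i k * g y k j) = if i = j then (1 : ℝ) else 0)
    (y : Fin n → ℝ) (i j : Fin n) : (∑ k, g y i k * ginv y k j) = if i = j then (1 : ℝ) else 0 := by
  have hm : (Matrix.of (ginv y)) * (Matrix.of (g y)) = 1 := by
    ext i j
    simp only [Matrix.mul_apply, Matrix.of_apply, hinv, Matrix.one_apply]
  have hm2 : (Matrix.of (g y)) * (Matrix.of (ginv y)) = 1 := mul_eq_one_comm.1 hm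
  have := congrFun (congrFun hm2 i) j
  simpa only [Matrix.mul_apply, Matrix.of_apply, Matrix.one_apply] using this

/-- lowering the index of the Christoffel symbols -/
lemma Γchr_lower {n : ℕ} {g ginv : (Fin n → ℝ) → Fin n → Fin n → ℝ}
    (hinv : ∀ y i j, (∑ k, ginv y i k * g y k j) = if i = j then (1 : ℝ) else 0)
    (y : Fin n → ℝ) (m j k : Fin n) :
    ∑ i, g y m i * Γchr g ginv y i j k = (1 / 2) *
      (pdN (fun z => g z m k) y j + pdN (fun z => g z j m) y k - pdN (fun z => g z j k) y m) := by
  unfold Γchr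
  have : ∀ i, g y m i * ((1 / 2) * ∑ l, ginv y i l *
    (pdN (fun z => g z l k) y j + pdN (fun z => g z j l) y k - pdN (fun z => g z j k) y l)) =
    ∑ l, (g y m i * ginv y i l) * ((1 / 2) * 
    (pdN (fun z => g z l k) y j + pdN (fun z => g z j l) y k - pdN (fun z => g z j k) y l)) := by
    intro i
    rw [Finset.mul_sum, Finset.mul_sum]
    refine Finset.sum_congr rfl fun l _ => ?_
    ring
  simp only [this]
  rw [Finset.sum_comm]
  simp only [← Finset.sum_mul, ginv_right hinv]
  simp

lemma Γchr_symm {n : ℕ} {g ginv : (Fin n → ℝ) → Fin n → Fin n → ℝ}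
    (hsymm : ∀ y i j, g y i j = g y j i) (y : Fin n → ℝ) (i j k : Fin n) :
    Γchr g ginv y i j k = Γchr g ginv y i k j := by
  unfold Γchr
  congr 1
  refine Finset.sum_congr rfl fun l _ => ?_
  have h1 : (fun z => g z l k) = fun z => g z k l := funext fun z => hsymm z _ _
  have h2 : (fun z => g z j l) = fun z => g z l j := funext fun z => hsymm z _ _
  have h3 : (fun z => g z j k) = fun z => g z k j := funext fun z => hsymm z _ _
  rw [h1, h2, h3]
  ring

lemma pdN_g {n : ℕ} {g ginv : (Fin n → ℝ) → Fin n → Fin n → ℝ}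
    (hsymm : ∀ y i j, g y i j = g y j i)
    (hinv : ∀ y i j, (∑ k, ginv y i k * g y k j) = if i = j then (1 : ℝ) else 0)
    (y : Fin n → ℝ) (a b c : Fin n) :
    pdN (fun z => g z a b) y c =
      ∑ e, g y a e * Γchr g ginv y e c b + ∑ e, g y b e * Γchr g ginv y e c a := by
  rw [Γchr_lower hinv, Γchr_lower hinv]
  have h1 : (fun z => g z b a) = fun z => g z a b := funext fun z => hsymm z _ _
  have h2 : (fun z => g z c a) = fun z => g z a c := funext fun z => hsymm z _ _
  have h3 : (fun z => g z c b) = fun z => g z b c := funext fun z => hsymm z _ _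
  rw [h1, h2, h3]
  ring

/-- inner product along `f` -/
def ipA {n n' : ℕ} (g' : (Fin n' → ℝ) → Fin n' → Fin n' → ℝ) (f : (Fin n → ℝ) → Fin n' → ℝ)
    (y : Fin n → ℝ) (u v : Fin n' → ℝ) : ℝ := ∑ a, ∑ b, g' (f y) a b * u a * v b

/-- covariant derivative along `f` -/
def DA {n n' : ℕ} (Γ' : (Fin n' → ℝ) → Fin n' → Fin n' → Fin n' → ℝ)
    (f : (Fin n → ℝ) → Fin n' → ℝ) (i : Fin n) (V : (Fin n → ℝ) → Fin n' → ℝ)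
    (y : Fin n → ℝ) (a : Fin n') : ℝ :=
  pdN (fun z => V z a) y i + ∑ b, ∑ c, Γ' (f y) a b c * pdmap f y b i * V y c

lemma ipA_comm {n n' : ℕ} {g' : (Fin n' → ℝ) → Fin n' → Fin n' → ℝ}
    {f : (Fin n → ℝ) → Fin n' → ℝ} (hsymm' : ∀ y a b, g' y a b = g' y b a)
    (y : Fin n → ℝ) (u v : Fin n' → ℝ) : ipA g' f y u v = ipA g' f y v u := by
  unfold ipA
  rw [Finset.sum_comm]
  refine Finset.sum_congr rfl fun a _ => Finset.sum_congr rfl fun b _ => ?_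
  rw [hsymm']; ring

lemma ipA_add_left {n n' : ℕ} {g' : (Fin n' → ℝ) → Fin n' → Fin n' → ℝ}
    {f : (Fin n → ℝ) → Fin n' → ℝ} 
    (y : Fin n → ℝ) (u w v : Fin n' → ℝ) :
    ipA g' f y (u + w) v = ipA g' f y u v + ipA g' f y w v := by
  unfold ipA
  simp only [← Finset.sum_add_distrib, Pi.add_apply]
  refine Finset.sum_congr rfl fun a _ => Finset.sum_congr rfl fun b _ => ?_
  ring

lemma ipA_sub_left {n n' : ℕ} {g' : (Fin n' → ℝ) → Fin n' → Fin n' → ℝ}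
    {f : (Fin n → ℝ) → Fin n' → ℝ} 
    (y : Fin n → ℝ) (u w v : Fin n' → ℝ) :
    ipA g' f y (u - w) v = ipA g' f y u v - ipA g' f y w v := by
  unfold ipA
  simp only [← Finset.sum_sub_distrib, Pi.sub_apply]
  refine Finset.sum_congr rfl fun a _ => Finset.sum_congr rfl fun b _ => ?_
  ring

lemma ipA_sum_left {n n' : ℕ} {g' : (Fin n' → ℝ) → Fin n' → Fin n' → ℝ}
    {f : (Fin n → ℝ) → Fin n' → ℝ} {ι : Type*} [Fintype ι]
    (y : Fin n → ℝ) (r : ι → ℝ) (u : ι → Fin n' → ℝ) (v : Fin n' → ℝ) :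
    ipA g' f y (∑ k, r k • u k) v = ∑ k, r k * ipA g' f y (u k) v := by
  let L : (Fin n' → ℝ) →ₗ[ℝ] ℝ :=
    { toFun := fun u => ipA g' f y u v
      map_add' := fun u w => ipA_add_left y u w v
      map_smul' := fun r u => by
        simp only [ipA, Pi.smul_apply, smul_eq_mul, RingHom.id_apply, Finset.mul_sum]
        refine Finset.sum_congr rfl fun a _ => Finset.sum_congr rfl fun b _ => ?_
        ring }
  have : L (∑ k, r k • u k) = ∑ k, r k * L (u k) := by
    rw [map_sum]; simp
  exact this

lemma sum3_swap13 {α β γ : Type*} [Fintype α] [Fintype β] [Fintype γ] (F : α → β → γ → ℝ) :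
    ∑ a, ∑ b, ∑ c, F a b c = ∑ c, ∑ b, ∑ a, F a b c := by
  calc _ = ∑ a, ∑ c, ∑ b, F a b c := Finset.sum_congr rfl fun a _ => Finset.sum_comm
    _ = ∑ c, ∑ a, ∑ b, F a b c := Finset.sum_comm
    _ = _ := Finset.sum_congr rfl fun a _ => Finset.sum_comm

lemma sum3_cyc {α β γ : Type*} [Fintype α] [Fintype β] [Fintype γ] (F : α → β → γ → ℝ) :
    ∑ a, ∑ b, ∑ c, F a b c = ∑ b, ∑ c, ∑ a, F a b c := by
  calc _ = ∑ b, ∑ a, ∑ c, F a b c := Finset.sum_comm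
    _ = _ := Finset.sum_congr rfl fun a _ => Finset.sum_comm

lemma ipA_deriv {n n' : ℕ} {g' g'inv : (Fin n' → ℝ) → Fin n' → Fin n' → ℝ}
    {f : (Fin n → ℝ) → Fin n' → ℝ} (hg' : ContDiff ℝ (⊤ : ℕ∞) fun y => g' y)
    (hsymm' : ∀ y a b, g' y a b = g' y b a)
    (hinv' : ∀ y a b, (∑ c, g'inv y a c * g' y c b) = if a = b then (1 : ℝ) else 0)
    (hf : ContDiff ℝ (⊤ : ℕ∞) f) (V W : (Fin n → ℝ) → Fin n' → ℝ)
    (hV : ∀ a, ContDiff ℝ (⊤ : ℕ∞) fun z => V z a)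
    (hW : ∀ a, ContDiff ℝ (⊤ : ℕ∞) fun z => W z a) (y : Fin n → ℝ) (i : Fin n) :
    pdN (fun z => ipA g' f z (V z) (W z)) y i =
      ipA g' f y (DA (Γchr g' g'inv) f i V y) (W y) +
      ipA g' f y (V y) (DA (Γchr g' g'inv) f i W y) := by
  have hgd : ∀ a b, Differentiable ℝ (fun y => g' y a b) := fun a b =>
    (contDiff_pi.1 (contDiff_pi.1 hg' a) b).differentiable (by simp)
  have hfd : Differentiable ℝ f := hf.differentiable (by simp)
  have hVd : ∀ a, Differentiable ℝ fun z => V z a := fun a => (hV a).differentiable (by simp)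
  have hWd : ∀ a, Differentiable ℝ fun z => W z a := fun a => (hW a).differentiable (by simp)
  have hgf : ∀ a b, Differentiable ℝ (fun y => g' (f y) a b) := fun a b => (hgd a b).comp hfd
  have e1 : pdN (fun z => ipA g' f z (V z) (W z)) y i = ∑ a, ∑ b,
      ((∑ c, pdN (fun z => g' z a b) (f y) c * pdmap f y c i) * V y a * W y b +
        g' (f y) a b * pdN (fun z => V z a) y i * W y b +
        g' (f y) a b * V y a * pdN (fun z => W z b) y i) := by
    unfold ipA
    rw [pdN_sum' (fun a => Differentiable.fun_sum fun b _ => ((hgf a b).fun_mul (hVd a)).fun_mul (hWd b))]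
    refine Finset.sum_congr rfl fun a _ => ?_
    rw [pdN_sum' (fun b => ((hgf a b).fun_mul (hVd a)).fun_mul (hWd b))]
    refine Finset.sum_congr rfl fun b _ => ?_
    rw [pdN_mul' ((hgf a b).fun_mul (hVd a)) (hWd b), pdN_mul' (hgf a b) (hVd a),
      pdN_comp' (hgd a b) hfd]
    ring
  rw [e1]
  have e2 : ipA g' f y (DA (Γchr g' g'inv) f i V y) (W y) =
      ∑ a, ∑ b, g' (f y) a b * pdN (fun z => V z a) y i * W y b +
      ∑ a, ∑ b, ∑ c, ∑ e,
        g' (f y) a b * Γchr g' g'inv (f y) a c e * pdmap f y c i * V y e * W y b := by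
    unfold ipA DA
    simp only [← Finset.sum_add_distrib]
    refine Finset.sum_congr rfl fun a _ => Finset.sum_congr rfl fun b _ => ?_
    simp only [mul_add, add_mul, Finset.mul_sum, Finset.sum_mul]
    congr 1
    refine Finset.sum_congr rfl fun c _ => Finset.sum_congr rfl fun e _ => ?_
    ring
  have e3 : ipA g' f y (V y) (DA (Γchr g' g'inv) f i W y) =
      ∑ a, ∑ b, g' (f y) a b * V y a * pdN (fun z => W z b) y i +
      ∑ a, ∑ b, ∑ c, ∑ e,
        g' (f y) a b * Γchr g' g'inv (f y) b c e * pdmap f y c i * V y a * W y e := by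
    unfold ipA DA
    simp only [← Finset.sum_add_distrib]
    refine Finset.sum_congr rfl fun a _ => Finset.sum_congr rfl fun b _ => ?_
    simp only [mul_add, Finset.mul_sum]
    congr 1
    refine Finset.sum_congr rfl fun c _ => Finset.sum_congr rfl fun e _ => ?_
    ring
  have e4 : ∑ a, ∑ b, (∑ c, pdN (fun z => g' z a b) (f y) c * pdmap f y c i) * V y a * W y b =
      ∑ a, ∑ b, ∑ c, ∑ e,
        g' (f y) a b * Γchr g' g'inv (f y) a c e * pdmap f y c i * V y e * W y b +
      ∑ a, ∑ b, ∑ c, ∑ e,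
        g' (f y) a b * Γchr g' g'inv (f y) b c e * pdmap f y c i * V y a * W y e := by
    have h5 : ∀ a b, (∑ c, pdN (fun z => g' z a b) (f y) c * pdmap f y c i) * V y a * W y b =
        ∑ c, ∑ e, g' (f y) b e * Γchr g' g'inv (f y) e c a * pdmap f y c i * V y a * W y b +
        ∑ c, ∑ e, g' (f y) a e * Γchr g' g'inv (f y) e c b * pdmap f y c i * V y a * W y b := by
      intro a b
      simp only [pdN_g hsymm' hinv', add_mul, Finset.sum_add_distrib, Finset.sum_mul]
      rw [add_comm]
    simp only [h5, Finset.sum_add_distrib]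
    congr 1
    · rw [Finset.sum_comm]
      conv_rhs => rw [Finset.sum_comm]
      refine Finset.sum_congr rfl fun b _ => ?_
      rw [sum3_swap13]
      refine Finset.sum_congr rfl fun a _ => Finset.sum_congr rfl fun c _ =>
        Finset.sum_congr rfl fun e _ => ?_
      rw [hsymm' (f y) b a]
    · refine Finset.sum_congr rfl fun b _ => ?_
      rw [sum3_swap13]
  rw [e2, e3]
  simp only [Finset.sum_add_distrib]
  rw [e4]
  ring

lemma pdmap_smooth {n n' : ℕ} {f : (Fin n → ℝ) → Fin n' → ℝ} (hf : ContDiff ℝ (⊤ : ℕ∞) f)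
    (a : Fin n') (i : Fin n) : ContDiff ℝ (⊤ : ℕ∞) fun y => pdmap f y a i :=
  pdN_smooth (contDiff_pi.1 hf a) i

lemma DA_smooth {n n' : ℕ} {Γ' : (Fin n' → ℝ) → Fin n' → Fin n' → Fin n' → ℝ}
    (hΓ : ∀ a b c, ContDiff ℝ (⊤ : ℕ∞) fun z => Γ' z a b c)
    {f : (Fin n → ℝ) → Fin n' → ℝ} (hf : ContDiff ℝ (⊤ : ℕ∞) f)
    {V : (Fin n → ℝ) → Fin n' → ℝ}
    (hV : ∀ a, ContDiff ℝ (⊤ : ℕ∞) fun z => V z a) (i : Fin n) (a : Fin n') :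
    ContDiff ℝ (⊤ : ℕ∞) fun y => DA Γ' f i V y a := by
  unfold DA
  refine (pdN_smooth (hV a) i).add (ContDiff.sum fun b _ => ContDiff.sum fun c _ => ?_)
  exact (((hΓ a b c).comp hf).mul (pdmap_smooth hf b i)).mul (hV c)

lemma DA_DA {n n' : ℕ} {Γ' : (Fin n' → ℝ) → Fin n' → Fin n' → Fin n' → ℝ}
    (hΓ : ∀ a b c, ContDiff ℝ (⊤ : ℕ∞) fun z => Γ' z a b c)
    {f : (Fin n → ℝ) → Fin n' → ℝ} (hf : ContDiff ℝ (⊤ : ℕ∞) f)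
    {V : (Fin n → ℝ) → Fin n' → ℝ}
    (hV : ∀ a, ContDiff ℝ (⊤ : ℕ∞) fun z => V z a) (i j : Fin n) (y : Fin n → ℝ) (a : Fin n') :
    DA Γ' f i (DA Γ' f j V) y a =
      (pdN (fun z => pdN (fun z => V z a) z j) y i +
        ∑ b, ∑ c, Γ' (f y) a b c * pdN (fun z => pdmap f z b j) y i * V y c +
        (∑ b, ∑ c, Γ' (f y) a b c * pdmap f y b j * pdN (fun z => V z c) y i +
        ∑ b, ∑ c, Γ' (f y) a b c * pdmap f y b i * pdN (fun z => V z c) y j)) +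
      (∑ b, ∑ c, ∑ d, pdN (fun z => Γ' z a b c) (f y) d * pdmap f y d i * pdmap f y b j * V y c +
       ∑ b, ∑ c, ∑ d, ∑ e, Γ' (f y) a b c * pdmap f y b i * Γ' (f y) c d e *
          pdmap f y d j * V y e) := by
  have hfd : Differentiable ℝ f := hf.differentiable (by simp)
  have hVd : ∀ a, Differentiable ℝ fun z => V z a := fun a => (hV a).differentiable (by simp)
  have hVd2 : Differentiable ℝ fun z => pdN (fun z => V z a) z j :=
    (pdN_smooth (hV a) j).differentiable (by simp)
  have hΓd : ∀ a b c, Differentiable ℝ fun z => Γ' z a b c :=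
    fun a b c => (hΓ a b c).differentiable (by simp)
  have hΓf : ∀ a b c, Differentiable ℝ fun z => Γ' (f z) a b c :=
    fun a b c => (hΓd a b c).comp hfd
  have hp : ∀ b, Differentiable ℝ fun z => pdmap f z b j :=
    fun b => (pdmap_smooth hf b j).differentiable (by simp)
  have e1 : pdN (fun z => DA Γ' f j V z a) y i =
      pdN (fun z => pdN (fun z => V z a) z j) y i +
      ∑ b, ∑ c, ((∑ d, pdN (fun z => Γ' z a b c) (f y) d * pdmap f y d i) * pdmap f y b j * V y c +
        Γ' (f y) a b c * pdN (fun z => pdmap f z b j) y i * V y c +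
        Γ' (f y) a b c * pdmap f y b j * pdN (fun z => V z c) y i) := by
    unfold DA
    rw [pdN_add' hVd2 (Differentiable.fun_sum fun b _ => Differentiable.fun_sum fun c _ =>
      ((hΓf a b c).fun_mul (hp b)).fun_mul (hVd c))]
    congr 1
    rw [pdN_sum' (fun b => Differentiable.fun_sum fun c _ =>
      ((hΓf a b c).fun_mul (hp b)).fun_mul (hVd c))]
    refine Finset.sum_congr rfl fun b _ => ?_
    rw [pdN_sum' (fun c => ((hΓf a b c).fun_mul (hp b)).fun_mul (hVd c))]
    refine Finset.sum_congr rfl fun c _ => ?_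
    rw [pdN_mul' ((hΓf a b c).fun_mul (hp b)) (hVd c), pdN_mul' (hΓf a b c) (hp b),
      pdN_comp' (hΓd a b c) hfd]
    ring
  have e2 : ∑ b, ∑ c, Γ' (f y) a b c * pdmap f y b i * DA Γ' f j V y c =
      ∑ b, ∑ c, Γ' (f y) a b c * pdmap f y b i * pdN (fun z => V z c) y j +
       ∑ b, ∑ c, ∑ d, ∑ e, Γ' (f y) a b c * pdmap f y b i * Γ' (f y) c d e *
          pdmap f y d j * V y e := by
    unfold DA
    simp only [← Finset.sum_add_distrib]
    refine Finset.sum_congr rfl fun b _ => Finset.sum_congr rfl fun c _ => ?_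
    simp only [mul_add, Finset.mul_sum]
    congr 1
    refine Finset.sum_congr rfl fun d _ => Finset.sum_congr rfl fun e _ => ?_
    ring
  have e0 : DA Γ' f i (DA Γ' f j V) y a = pdN (fun z => DA Γ' f j V z a) y i +
    ∑ b, ∑ c, Γ' (f y) a b c * pdmap f y b i * DA Γ' f j V y c := rfl
  rw [e0, e1, e2]
  simp only [Finset.sum_add_distrib, Finset.sum_mul]
  ring

/-- curvature of the pulled back connection -/
lemma DA_curv {n n' : ℕ} {g' g'inv : (Fin n' → ℝ) → Fin n' → Fin n' → ℝ}
    (hΓ : ∀ a b c, ContDiff ℝ (⊤ : ℕ∞) fun z => Γchr g' g'inv z a b c)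
    {f : (Fin n → ℝ) → Fin n' → ℝ} (hf : ContDiff ℝ (⊤ : ℕ∞) f)
    {V : (Fin n → ℝ) → Fin n' → ℝ}
    (hV : ∀ a, ContDiff ℝ (⊤ : ℕ∞) fun z => V z a) (i j : Fin n) (y : Fin n → ℝ) (a : Fin n') :
    DA (Γchr g' g'inv) f i (DA (Γchr g' g'inv) f j V) y a -
      DA (Γchr g' g'inv) f j (DA (Γchr g' g'inv) f i V) y a =
      ∑ b, ∑ c, ∑ d, Riem g' g'inv (f y) a b c d * V y b * pdmap f y c i * pdmap f y d j := by
  rw [DA_DA hΓ hf hV, DA_DA hΓ hf hV, pdN_comm (hV a) y i j]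
  have h1 : ∀ b, pdN (fun z => pdmap f z b j) y i = pdN (fun z => pdmap f z b i) y j :=
    fun b => pdN_comm (contDiff_pi.1 hf b) y i j
  simp only [h1]
  set Γ' := Γchr g' g'inv with hG
  have e : ∑ b, ∑ c, ∑ d, Riem g' g'inv (f y) a b c d * V y b * pdmap f y c i * pdmap f y d j =
      ∑ b, ∑ c, ∑ d, pdN (fun z => Γ' z a d b) (f y) c * pdmap f y c i * pdmap f y d j * V y b -
      ∑ b, ∑ c, ∑ d, pdN (fun z => Γ' z a c b) (f y) d * pdmap f y d j * pdmap f y c i * V y b +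
      (∑ b, ∑ c, ∑ d, ∑ p, Γ' (f y) a c p * pdmap f y c i * Γ' (f y) p d b *
          pdmap f y d j * V y b -
       ∑ b, ∑ c, ∑ d, ∑ p, Γ' (f y) a d p * pdmap f y d j * Γ' (f y) p c b *
          pdmap f y c i * V y b) := by
    simp only [← Finset.sum_add_distrib, ← Finset.sum_sub_distrib]
    refine Finset.sum_congr rfl fun b _ => Finset.sum_congr rfl fun c _ =>
      Finset.sum_congr rfl fun d _ => ?_
    unfold Riem
    simp only [← hG, add_mul, sub_mul, Finset.sum_mul]
    congr 1
    · ring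
    · refine Finset.sum_congr rfl fun p _ => ?_
      ring
  rw [e]
  have t1 : ∑ b, ∑ c, ∑ d, pdN (fun z => Γ' z a d b) (f y) c * pdmap f y c i * pdmap f y d j *
      V y b = ∑ b, ∑ c, ∑ d, pdN (fun z => Γ' z a b c) (f y) d * pdmap f y d i *
        pdmap f y b j * V y c := (sum3_cyc _).symm
  have t2 : ∑ b, ∑ c, ∑ d, pdN (fun z => Γ' z a c b) (f y) d * pdmap f y d j * pdmap f y c i *
      V y b = ∑ b, ∑ c, ∑ d, pdN (fun z => Γ' z a b c) (f y) d * pdmap f y d j *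
        pdmap f y b i * V y c := Finset.sum_comm
  have t3 : ∑ b, ∑ c, ∑ d, ∑ p, Γ' (f y) a c p * pdmap f y c i * Γ' (f y) p d b *
          pdmap f y d j * V y b = ∑ b, ∑ c, ∑ d, ∑ e, Γ' (f y) a b c * pdmap f y b i *
          Γ' (f y) c d e * pdmap f y d j * V y e := by
    rw [Finset.sum_comm]
    refine Finset.sum_congr rfl fun c _ => ?_
    exact sum3_swap13 _
  have t4 : ∑ b, ∑ c, ∑ d, ∑ p, Γ' (f y) a d p * pdmap f y d j * Γ' (f y) p c b *
          pdmap f y c i * V y b = ∑ b, ∑ c, ∑ d, ∑ e, Γ' (f y) a b c * pdmap f y b j *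
          Γ' (f y) c d e * pdmap f y d i * V y e := by
    rw [sum3_swap13]
    refine Finset.sum_congr rfl fun c _ => ?_
    rw [Finset.sum_comm]
    exact sum3_swap13 _
  rw [t1, t2, t3, t4]
  ring

lemma DA_symm {n n' : ℕ} {g' g'inv : (Fin n' → ℝ) → Fin n' → Fin n' → ℝ}
    (hsymm' : ∀ y a b, g' y a b = g' y b a)
    {f : (Fin n → ℝ) → Fin n' → ℝ} (hf : ContDiff ℝ (⊤ : ℕ∞) f) (i j : Fin n) (y : Fin n → ℝ) :
    DA (Γchr g' g'inv) f i (fun z a => pdmap f z a j) y =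
      DA (Γchr g' g'inv) f j (fun z a => pdmap f z a i) y := by
  funext a
  unfold DA
  congr 1
  · exact pdN_comm (contDiff_pi.1 hf a) y i j
  · rw [Finset.sum_comm]
    refine Finset.sum_congr rfl fun b _ => Finset.sum_congr rfl fun c _ => ?_
    rw [Γchr_symm hsymm']; ring

lemma sInner_cl_skew (v : ℝ × ℝ) (s t : Spinor) : sInner s (cl v t) = - sInner t (cl v s) := by
  simp [sInner, cl]
  ring

lemma sInner_cl_lin (a b : ℝ) (s t : Spinor) :
    sInner s (cl (a, b) t) = a * sInner s (cl (1, 0) t) + b * sInner s (cl (0, 1) t) := by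
  simp [sInner, cl]
  ring

end GaussAux


/-- Gauss equation with one index raised -/
lemma gauss_raised
    {n n' : ℕ}
    (g ginv : (Fin n → ℝ) → Fin n → Fin n → ℝ)
    (g' g'inv : (Fin n' → ℝ) → Fin n' → Fin n' → ℝ)
    (hg : ContDiff ℝ (⊤ : ℕ∞) fun y => g y) (hg' : ContDiff ℝ (⊤ : ℕ∞) fun y => g' y)
    (hsymm : ∀ y i j, g y i j = g y j i) (hsymm' : ∀ y a b, g' y a b = g' y b a)
    (hinv : ∀ y i j, (∑ k, ginv y i k * g y k j) = if i = j then (1 : ℝ) else 0)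
    (hinv' : ∀ y a b, (∑ c, g'inv y a c * g' y c b) = if a = b then (1 : ℝ) else 0)
    (f : (Fin n → ℝ) → Fin n' → ℝ) (hf : ContDiff ℝ (⊤ : ℕ∞) f)
    (hiso : ∀ y i j, g y i j = ∑ a, ∑ b, g' (f y) a b * pdmap f y a i * pdmap f y b j)
    (P : (Fin n → ℝ) → (Fin n' → ℝ) → (Fin n → ℝ) → Fin n → ℝ)
    (hP : ∀ y (ξ : Fin n' → ℝ),
      (∀ Z : Fin n → ℝ, (∑ a, ∑ b, g' (f y) a b * ξ a * (∑ i, Z i * pdmap f y b i)) = 0) →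
      ∀ X Y : Fin n → ℝ,
        (∑ k, ∑ m, g y k m * P y ξ X k * Y m) =
          ∑ a, ∑ b, g' (f y) a b *
            (∑ i, ∑ j, X i * Y j * sff (Γchr g ginv) (Γchr g' g'inv) f y i j a) * ξ b)
    (y : Fin n → ℝ) (m l i j : Fin n) :
    Riem g ginv y m l i j =
      P y (fun a => sff (Γchr g ginv) (Γchr g' g'inv) f y l j a) (Pi.single i 1) m -
      P y (fun a => sff (Γchr g ginv) (Γchr g' g'inv) f y l i a) (Pi.single j 1) m +
      RiemPull g ginv g' g'inv f y m l i j := by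
  have hΓ' : ∀ a b c, ContDiff ℝ (⊤ : ℕ∞) fun z => Γchr g' g'inv z a b c :=
    Γchr_smooth hg' hinv'
  have hΓ : ∀ a b c, ContDiff ℝ (⊤ : ℕ∞) fun z => Γchr g ginv z a b c :=
    Γchr_smooth hg hinv
  have hΓd : ∀ a b c, Differentiable ℝ fun z => Γchr g ginv z a b c :=
    fun a b c => (hΓ a b c).differentiable (by simp)
  have hgd : ∀ a b, Differentiable ℝ (fun y => g y a b) := fun a b =>
    (contDiff_pi.1 (contDiff_pi.1 hg a) b).differentiable (by simp)
  set F : Fin n → (Fin n → ℝ) → Fin n' → ℝ := fun i z a => pdmap f z a i with hF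
  have hFs : ∀ i a, ContDiff ℝ (⊤ : ℕ∞) fun z => F i z a := fun i a => pdmap_smooth hf a i
  set D : Fin n → ((Fin n → ℝ) → Fin n' → ℝ) → (Fin n → ℝ) → Fin n' → ℝ :=
    DA (Γchr g' g'inv) f with hD
  have hDs : ∀ i j a, ContDiff ℝ (⊤ : ℕ∞) fun z => D i (F j) z a :=
    fun i j a => DA_smooth hΓ' hf (hFs j) i a
  set A : Fin n → Fin n → Fin n' → ℝ :=
    fun i j a => sff (Γchr g ginv) (Γchr g' g'inv) f y i j a with hA
  have hcomm := @ipA_comm n n' g' f hsymm'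
  have hgip : ∀ i j, (fun z => g z i j) = fun z => ipA g' f z (F i z) (F j z) :=
    fun i j => funext fun z => hiso z i j
  have hgip' : ∀ i j z, g z i j = ipA g' f z (F i z) (F j z) := fun i j z => hiso z i j
  have hDsymm : ∀ i j z, D i (F j) z = D j (F i) z := fun i j z => DA_symm hsymm' hf i j z
  have hdg : ∀ i j k z, pdN (fun z => g z i j) z k =
      ipA g' f z (D k (F i) z) (F j z) + ipA g' f z (F i z) (D k (F j) z) := by
    intro i j k z
    rw [hgip]
    exact ipA_deriv hg' hsymm' hinv' hf _ _ (hFs i) (hFs j) z k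
  have hK : ∀ z i j k, ipA g' f z (D i (F j) z) (F k z) = ∑ l, g z k l * Γchr g ginv z l i j := by
    intro z i j k
    rw [Γchr_lower hinv, hdg, hdg, hdg, hDsymm k i, hDsymm k j, hDsymm j i,
      hcomm z (F k z), hcomm z (F i z)]
    ring
  have hAD : ∀ i j, A i j = D i (F j) y - ∑ k, Γchr g ginv y k i j • F k y := by
    intro i j
    funext a
    simp only [hA, hD, sff, DA, hF, Pi.sub_apply, Finset.sum_apply, Pi.smul_apply, smul_eq_mul]
  have hAsymm : ∀ i j, A i j = A j i := by
    intro i j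
    rw [hAD, hAD, hDsymm i j]
    simp only [Γchr_symm hsymm y _ i j]
  have hnorm : ∀ i j k, ipA g' f y (A i j) (F k y) = 0 := by
    intro i j k
    rw [hAD, ipA_sub_left, ipA_sum_left, hK]
    simp only [← hgip']
    rw [sub_eq_zero]
    refine Finset.sum_congr rfl fun l _ => ?_
    rw [hsymm y k l]; ring
  have hAA : ∀ i j k l, ipA g' f y (A i j) (D k (F l) y) = ipA g' f y (A i j) (A k l) := by
    intro i j k l
    have : D k (F l) y = A k l + ∑ q, Γchr g ginv y q k l • F q y := by
      rw [hAD]; abel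
    rw [this, hcomm, ipA_add_left, ipA_sum_left, hcomm y (A k l)]
    simp [hcomm y (F _ y), hnorm]
  -- half of the Gauss equation
  have hhalf : ∀ m l i j, ∑ k, g y m k * pdN (fun z => Γchr g ginv z k j l) y i +
      ∑ k, g y m k * ∑ q, Γchr g ginv y k i q * Γchr g ginv y q j l =
      ipA g' f y (D i (D j (F l)) y) (F m y) + ipA g' f y (A j l) (A i m) := by
    intro m l i j
    have h1 : pdN (fun z => ipA g' f z (D j (F l) z) (F m z)) y i =
        ipA g' f y (D i (D j (F l)) y) (F m y) + ipA g' f y (D j (F l) y) (D i (F m) y) :=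
      ipA_deriv hg' hsymm' hinv' hf _ _ (hDs j l) (hFs m) y i
    have h2 : pdN (fun z => ipA g' f z (D j (F l) z) (F m z)) y i =
        ∑ k, (pdN (fun z => g z m k) y i * Γchr g ginv y k j l +
          g y m k * pdN (fun z => Γchr g ginv z k j l) y i) := by
      simp only [hK]
      rw [pdN_sum' (fun k => (hgd m k).fun_mul (hΓd k j l))]
      exact Finset.sum_congr rfl fun k _ => pdN_mul' (hgd m k) (hΓd k j l) i
    have h3 : ipA g' f y (A j l) (A i m) = ipA g' f y (D j (F l) y) (D i (F m) y) -
        ∑ k, Γchr g ginv y k j l * ipA g' f y (F k y) (D i (F m) y) := by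
      rw [← hAA, hAD, ipA_sub_left, ipA_sum_left]
    have h4 : ∑ k, pdN (fun z => g z m k) y i * Γchr g ginv y k j l =
        ∑ k, Γchr g ginv y k j l * ipA g' f y (F k y) (D i (F m) y) +
        ∑ k, g y m k * ∑ q, Γchr g ginv y k i q * Γchr g ginv y q j l := by
      have h5 : ∑ k, g y m k * ∑ q, Γchr g ginv y k i q * Γchr g ginv y q j l =
          ∑ q, ipA g' f y (F m y) (D i (F q) y) * Γchr g ginv y q j l := by
        simp only [Finset.mul_sum]
        rw [Finset.sum_comm]
        refine Finset.sum_congr rfl fun q _ => ?_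
        rw [hcomm, hK, Finset.sum_mul]
        refine Finset.sum_congr rfl fun k _ => ?_
        ring
      rw [h5, ← Finset.sum_add_distrib]
      refine Finset.sum_congr rfl fun k _ => ?_
      rw [hdg, hcomm y (F k y)]
      ring
    rw [Finset.sum_add_distrib] at h2
    linarith
  have hcurv : ∀ m l i j, ∑ k, g y m k * Riem g ginv y k l i j =
      ipA g' f y (D i (D j (F l)) y - D j (D i (F l)) y) (F m y) +
        ipA g' f y (A j l) (A i m) - ipA g' f y (A i l) (A j m) := by
    intro m l i j
    have h1 := hhalf m l i j
    have h2 := hhalf m l j i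
    rw [ipA_sub_left]
    have h3 : ∑ k, g y m k * Riem g ginv y k l i j =
      (∑ k, g y m k * pdN (fun z => Γchr g ginv z k j l) y i +
      ∑ k, g y m k * ∑ q, Γchr g ginv y k i q * Γchr g ginv y q j l) -
      (∑ k, g y m k * pdN (fun z => Γchr g ginv z k i l) y j +
      ∑ k, g y m k * ∑ q, Γchr g ginv y k j q * Γchr g ginv y q i l) := by
      simp only [← Finset.sum_add_distrib, ← Finset.sum_sub_distrib]
      refine Finset.sum_congr rfl fun k _ => ?_
      unfold Riem
      rw [Finset.sum_sub_distrib]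
      ring
    rw [h3, h1, h2]
    ring
  have hpull : ∀ m, ipA g' f y (D i (D j (F l)) y - D j (D i (F l)) y) (F m y) =
      ∑ a, ∑ b, ∑ c, ∑ d,
      (∑ e, g' (f y) a e * Riem g' g'inv (f y) e b c d) *
        pdmap f y a m * pdmap f y b l * pdmap f y c i * pdmap f y d j := by
    intro m
    have h1 : D i (D j (F l)) y - D j (D i (F l)) y = fun a =>
        ∑ b, ∑ c, ∑ d, Riem g' g'inv (f y) a b c d * F l y b * pdmap f y c i * pdmap f y d j :=
      funext fun a => DA_curv hΓ' hf (hFs l) i j y a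
    rw [h1, hcomm]
    unfold ipA
    refine Finset.sum_congr rfl fun a _ => ?_
    simp only [Finset.mul_sum, Finset.sum_mul]
    rw [sum3_cyc]
    refine Finset.sum_congr rfl fun b _ => ?_
    rw [Finset.sum_congr rfl fun c _ => Finset.sum_comm]
    refine Finset.sum_congr rfl fun c _ => ?_
    refine Finset.sum_congr rfl fun d _ => ?_
    refine Finset.sum_congr rfl fun e _ => ?_
    simp only [hF]
    ring
  have hraise : ∀ T : Fin n → ℝ, ∀ m, T m = ∑ k, ginv y m k * ∑ q, g y k q * T q := by
    intro T m
    simp only [Finset.mul_sum]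
    rw [Finset.sum_comm]
    simp only [← mul_assoc, ← Finset.sum_mul, hinv]
    simp
  have hPA : ∀ l j i k, ∑ q, g y k q * P y (A l j) (Pi.single i 1) q =
      ipA g' f y (A l j) (A i k) := by
    intro l j i k
    have hn : ∀ Z : Fin n → ℝ,
        (∑ a, ∑ b, g' (f y) a b * A l j a * (∑ i, Z i * pdmap f y b i)) = 0 := by
      intro Z
      have : ipA g' f y (A l j) (∑ q, Z q • F q y) = 0 := by
        rw [hcomm, ipA_sum_left]
        simp [hcomm y (F _ y), hnorm]
      simpa only [ipA, Finset.sum_apply, Pi.smul_apply, smul_eq_mul, hF] using this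
    have h := hP y (A l j) hn (Pi.single i 1) (Pi.single k 1)
    have hL : (∑ q, ∑ m, g y q m * P y (A l j) (Pi.single i 1) q * (Pi.single k 1 : Fin n → ℝ) m) =
        ∑ q, g y k q * P y (A l j) (Pi.single i 1) q := by
      refine Finset.sum_congr rfl fun q _ => ?_
      rw [hsymm y k q]
      simp [Pi.single_apply]
    rw [← hL, h, hcomm]
    unfold ipA
    refine Finset.sum_congr rfl fun a _ => Finset.sum_congr rfl fun b _ => ?_
    congr 2
    simp [Pi.single_apply, hA]
  change _ = P y (A l j) (Pi.single i 1) m - P y (A l i) (Pi.single j 1) m + _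
  rw [hraise (fun m => Riem g ginv y m l i j) m, hraise (P y (A l j) (Pi.single i 1)) m,
    hraise (P y (A l i) (Pi.single j 1)) m]
  unfold RiemPull
  rw [← Finset.sum_sub_distrib, ← Finset.sum_add_distrib]
  refine Finset.sum_congr rfl fun k _ => ?_
  rw [hcurv, hpull, hPA, hPA, hAsymm j l, hAsymm i l]
  ring

/-- **The curvature term along an isometric immersion (equation of Gauss).**
Let `f : N → N'` be an isometric immersion with second fundamental form `A` and shape
operator `P`, related by `⟨P(ξ;X),Y⟩_{TN} = ⟨A(X,Y),ξ⟩_{TN'}` for tangent `X, Y` and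
normal `ξ`.  Then, for every map `φ : M → N` with spinor field `ψ` along `φ`, the
curvature terms satisfy `R(φ,ψ) = P(𝒜(dφ(e_α), e_α·ψ); ψ) + R'(φ,ψ)`, where
`R(φ,ψ)^m = ½ R^m_{lij}(φ) ⟨ψ^i, ∇φ^l·ψ^j⟩`,
`P(𝒜(dφ(e_α),e_α·ψ);ψ)^m = P(A(∂_{y^l},∂_{y^j});∂_{y^i})^m ⟨ψ^i, e_α·ψ^j⟩ φ^l_α`, and
`R'(φ,ψ)^m = ½ R'^m_{lij}(φ) ⟨ψ^i, ∇φ^l·ψ^j⟩` is formed from the pulled-back curvature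
of `N'`. -/
theorem curvature_term_isometric_immersion
    {n n' : ℕ}
    (g ginv : (Fin n → ℝ) → Fin n → Fin n → ℝ)
    (g' g'inv : (Fin n' → ℝ) → Fin n' → Fin n' → ℝ)
    (hg : ContDiff ℝ (⊤ : ℕ∞) fun y => g y) (hg' : ContDiff ℝ (⊤ : ℕ∞) fun y => g' y)
    (hsymm : ∀ y i j, g y i j = g y j i) (hsymm' : ∀ y a b, g' y a b = g' y b a)
    (hinv : ∀ y i j, (∑ k, ginv y i k * g y k j) = if i = j then (1 : ℝ) else 0)
    (hinv' : ∀ y a b, (∑ c, g'inv y a c * g' y c b) = if a = b then (1 : ℝ) else 0)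
    (f : (Fin n → ℝ) → Fin n' → ℝ) (hf : ContDiff ℝ (⊤ : ℕ∞) f)
    -- `f` is an isometric immersion
    (hiso : ∀ y i j, g y i j = ∑ a, ∑ b, g' (f y) a b * pdmap f y a i * pdmap f y b j)
    (himm : ∀ y (X : Fin n → ℝ), (∀ a, (∑ i, X i * pdmap f y a i) = 0) → X = 0)
    -- the shape operator `P(ξ;X)` of the immersion, characterised by
    -- `⟨P(ξ;X),Y⟩_{TN} = ⟨A(X,Y),ξ⟩_{TN'}` for all normal fields `ξ`
    (P : (Fin n → ℝ) → (Fin n' → ℝ) → (Fin n → ℝ) → Fin n → ℝ)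
    (hP : ∀ y (ξ : Fin n' → ℝ),
      (∀ Z : Fin n → ℝ, (∑ a, ∑ b, g' (f y) a b * ξ a * (∑ i, Z i * pdmap f y b i)) = 0) →
      ∀ X Y : Fin n → ℝ,
        (∑ k, ∑ m, g y k m * P y ξ X k * Y m) =
          ∑ a, ∑ b, g' (f y) a b *
            (∑ i, ∑ j, X i * Y j * sff (Γchr g ginv) (Γchr g' g'inv) f y i j a) * ξ b)
    (φ : ℝ × ℝ → Fin n → ℝ) (hφ : ContDiff ℝ (⊤ : ℕ∞) φ)
    (ψ : ℝ × ℝ → Fin n → Spinor) (hψ : ContDiff ℝ (⊤ : ℕ∞) ψ) :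
    ∀ (p : ℝ × ℝ) (m : Fin n),
      (1 / 2) * (∑ l, ∑ i, ∑ j, Riem g ginv (φ p) m l i j *
          sInner (ψ p i) (cl (gradc (fun q => φ q l) p) (ψ p j))) =
        (∑ i, ∑ j, ∑ l,
          P (φ p) (fun a => sff (Γchr g ginv) (Γchr g' g'inv) f (φ p) l j a) (Pi.single i 1) m *
            (pdx (fun q => φ q l) p * sInner (ψ p i) (cl (1, 0) (ψ p j)) +
             pdy (fun q => φ q l) p * sInner (ψ p i) (cl (0, 1) (ψ p j)))) +
        (1 / 2) * (∑ l, ∑ i, ∑ j, RiemPull g ginv g' g'inv f (φ p) m l i j *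
          sInner (ψ p i) (cl (gradc (fun q => φ q l) p) (ψ p j))) := by
  intro p m
  have key := gauss_raised g ginv g' g'inv hg hg' hsymm hsymm' hinv hinv' f hf hiso P hP (φ p)
  set y := φ p
  have hS : ∀ l i j, pdx (fun q => φ q l) p * sInner (ψ p i) (cl (1, 0) (ψ p j)) +
      pdy (fun q => φ q l) p * sInner (ψ p i) (cl (0, 1) (ψ p j)) =
      sInner (ψ p i) (cl (gradc (fun q => φ q l) p) (ψ p j)) := by
    intro l i j
    exact (sInner_cl_lin _ _ _ _).symm
  simp only [hS]
  have hskew : ∀ l i j, sInner (ψ p i) (cl (gradc (fun q => φ q l) p) (ψ p j)) =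
      - sInner (ψ p j) (cl (gradc (fun q => φ q l) p) (ψ p i)) :=
    fun l i j => sInner_cl_skew _ _ _
  have hgen : ∃ S : Fin n → Fin n → Fin n → ℝ, ∀ l i j,
      sInner (ψ p i) (cl (gradc (fun q => φ q l) p) (ψ p j)) = S l i j :=
    ⟨_, fun _ _ _ => rfl⟩
  obtain ⟨S, hSS⟩ := hgen
  simp only [hSS] at hskew ⊢
  simp only [key, add_mul, sub_mul, Finset.sum_add_distrib, Finset.sum_sub_distrib]
  have h1 : ∑ l, ∑ i, ∑ j,
      P y (fun a => sff (Γchr g ginv) (Γchr g' g'inv) f y l i a) (Pi.single j 1) m * S l i j =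
      - ∑ l, ∑ i, ∑ j,
      P y (fun a => sff (Γchr g ginv) (Γchr g' g'inv) f y l j a) (Pi.single i 1) m * S l i j := by
    rw [← Finset.sum_neg_distrib]
    refine Finset.sum_congr rfl fun l _ => ?_
    rw [Finset.sum_comm, ← Finset.sum_neg_distrib]
    refine Finset.sum_congr rfl fun i _ => ?_
    rw [← Finset.sum_neg_distrib]
    refine Finset.sum_congr rfl fun j _ => ?_
    rw [hskew l j i]; ring
  have h2 : ∑ i, ∑ j, ∑ l,
      P y (fun a => sff (Γchr g ginv) (Γchr g' g'inv) f y l j a) (Pi.single i 1) m * S l i j =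
      ∑ l, ∑ i, ∑ j,
      P y (fun a => sff (Γchr g ginv) (Γchr g' g'inv) f y l j a) (Pi.single i 1) m * S l i j :=
    (sum3_cyc _).symm
  rw [h1, h2]
  ring
end
end

section
/- (No energy loss of the spinors on necks) In the blow-up of a sequence of smooth Dirac-harmonic maps (φ_k,ψ_k): M → S^n with E(φ_k,ψ_k) ≤ Λ around a blow-up point p with a single bubble, with scales λ_k → 0, centers x_k → p, and neck annuli A(δ,R,k) := {x : λ_k R ≤ |x − x_k| ≤ δ}, one has ‖ψ_k‖_{L⁴(A(δ,R,k))} ≤ C√ε + Cε^{1/4} for k, R large and δ small; consequently lim_{R→∞} lim_{δ→0} lim_{k→∞} E(ψ_k; A(δ,R,k)) = 0, where E(ψ_k; A) := ∫_A |ψ_k|⁴. -/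
noncomputable section

open MeasureTheory Complex Filter
open scoped ENNReal NNReal

/-- `(φ,ψ)` is a smooth Dirac-harmonic map from the flat domain `D` into
`S^n ⊆ ℝ^{n+1}` (in the extrinsic form of the equations):  `φ` takes values in `S^n`,
`ψ` is a spinor field along `φ`, and
`∂̸ψ^m = -Σ_i (∇φ^i·ψ^i) ⊗ φ^m`, `Δφ^m = -|dφ|² φ^m + φ^i_α ⟨e_α·ψ^i, ψ^m⟩`,
equivalently `D̸ψ = 0` and `τ(φ) = R(φ,ψ)`. -/
def IsDiracHarmonicSphere (n : ℕ) (D : Set (ℝ × ℝ)) (φ : ℝ × ℝ → Fin (n + 1) → ℝ)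
    (ψ : ℝ × ℝ → Fin (n + 1) → Spinor) : Prop :=
  ContDiffOn ℝ (⊤ : ℕ∞) φ D ∧ ContDiffOn ℝ (⊤ : ℕ∞) ψ D ∧
  (∀ p ∈ D, ∑ i, (φ p i) ^ 2 = 1) ∧
  (∀ p ∈ D, ∑ i, φ p i • ψ p i = (0 : Spinor)) ∧
  (∀ p ∈ D, ∀ m, diracOp (fun q => ψ q m) p =
    -(φ p m) • ∑ i, cl (gradc (fun q => φ q i) p) (ψ p i)) ∧
  (∀ p ∈ D, ∀ m, lap (fun q => φ q m) p =
    -(eDen φ p) * φ p m +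
    ∑ i, (pdx (fun q => φ q i) p * sInner (cl (1, 0) (ψ p i)) (ψ p m) +
          pdy (fun q => φ q i) p * sInner (cl (0, 1) (ψ p i)) (ψ p m)))

/-- The neck annulus `A(δ,R,k) = {x : λ_k R ≤ |x - x_k| ≤ δ}`. -/
def neck (xc : ℝ × ℝ) (lam R δ : ℝ) : Set (ℝ × ℝ) :=
  {x | lam * R ≤ dist x xc ∧ dist x xc ≤ δ}

lemma nl_scale (F : ℝ × ℝ → ℝ≥0∞) (hF : Measurable F) (x : ℝ × ℝ) (ρ : ℝ) (hρ : 0 < ρ) :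
    ∫⁻ y, F y = ENNReal.ofReal (ρ ^ 2) * ∫⁻ z, F (x + ρ • z) := by
  have h1 : ∫⁻ y, F y = ∫⁻ y, F (x + y) := (lintegral_add_left_eq_self F x).symm
  have hm : Measurable fun z : ℝ × ℝ => ρ • z := by fun_prop
  have h2 : ∫⁻ z, F (x + ρ • z) = ∫⁻ y, F (x + y) ∂(Measure.map (fun z : ℝ × ℝ => ρ • z) volume) := by
    rw [lintegral_map (by fun_prop) hm]
  have h3 := Measure.map_addHaar_smul (volume : Measure (ℝ × ℝ)) hρ.ne'
  rw [h1, h2]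
  erw [h3]
  rw [lintegral_smul_measure, smul_eq_mul, ← mul_assoc, ← ENNReal.ofReal_mul (by positivity)]
  have : ρ ^ 2 * |(ρ ^ Module.finrank ℝ (ℝ × ℝ))⁻¹| = 1 := by
    simp [abs_of_pos hρ]
    field_simp
  rw [this]; simp

lemma nl_c1_one : ∫⁻ a in Set.Ioo (-1:ℝ) 1, (‖a‖ₑ ^ (1/2:ℝ))⁻¹ < ⊤ := by
  have hi : IntervalIntegrable (fun x : ℝ => x ^ (-(1/2):ℝ)) volume 0 1 :=
    intervalIntegral.intervalIntegrable_rpow' (by norm_num)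
  have hi2 : IntervalIntegrable (fun x : ℝ => |x| ^ (-(1/2):ℝ)) volume 0 1 := by
    refine hi.congr ?_
    intro x hx
    simp at hx
    simp [abs_of_pos hx.1]
  have hi3 : IntervalIntegrable (fun x : ℝ => |x| ^ (-(1/2):ℝ)) volume (-1) 0 := by
    have := hi2.symm.comp_sub_left 0
    simpa using this
  have hi4 := hi3.trans hi2
  rw [intervalIntegrable_iff_integrableOn_Ioo_of_le (by norm_num)] at hi4
  have h5 := hi4.2
  refine lt_of_le_of_lt (lintegral_mono_ae ?_) h5
  have : ∀ᵐ a : ℝ ∂(volume.restrict (Set.Ioo (-1:ℝ) 1)), a ≠ 0 := by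
    apply ae_restrict_of_ae
    simp [ae_iff]
  filter_upwards [this] with a ha
  have ha' : 0 < |a| := by positivity
  rw [Real.enorm_of_nonneg (by positivity : 0 ≤ |a| ^ (-(1/2):ℝ)), ← enorm_norm, Real.enorm_of_nonneg (by positivity), Real.norm_eq_abs,
    Real.rpow_neg ha'.le, ENNReal.ofReal_inv_of_pos (by positivity), ENNReal.ofReal_rpow_of_pos ha']

lemma nl_c1 : ∫⁻ y in Metric.ball (0 : ℝ × ℝ) 1, ‖y‖ₑ⁻¹ < ⊤ := by
  have hb : Metric.ball (0 : ℝ × ℝ) 1 = Set.Ioo (-1:ℝ) 1 ×ˢ Set.Ioo (-1:ℝ) 1 := by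
    rw [← Prod.mk_zero_zero, ← ball_prod_same, Real.ball_eq_Ioo]; simp
  have hle : ∀ y : ℝ × ℝ, ‖y‖ₑ⁻¹ ≤ (‖y.1‖ₑ ^ (1/2:ℝ))⁻¹ * (‖y.2‖ₑ ^ (1/2:ℝ))⁻¹ := by
    intro y
    rw [← ENNReal.mul_inv (Or.inr (by finiteness)) (Or.inl (by finiteness))]
    apply ENNReal.inv_le_inv.2
    have e1 : ‖y.1‖ₑ ≤ ‖y‖ₑ := by
      exact enorm_le_iff_norm_le.2 (norm_fst_le y)
    have e2 : ‖y.2‖ₑ ≤ ‖y‖ₑ := by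
      exact enorm_le_iff_norm_le.2 (norm_snd_le y)
    calc ‖y.1‖ₑ ^ (1/2:ℝ) * ‖y.2‖ₑ ^ (1/2:ℝ) ≤ ‖y‖ₑ ^ (1/2:ℝ) * ‖y‖ₑ ^ (1/2:ℝ) := by gcongr
      _ = ‖y‖ₑ := by
        rw [← ENNReal.rpow_add_of_nonneg _ _ (by norm_num) (by norm_num)]; norm_num
  rw [hb]
  refine lt_of_le_of_lt (lintegral_mono hle) ?_
  rw [Measure.volume_eq_prod, ← Measure.prod_restrict, lintegral_prod_mul (f := fun a : ℝ => (‖a‖ₑ ^ (1/2:ℝ))⁻¹) (g := fun a : ℝ => (‖a‖ₑ ^ (1/2:ℝ))⁻¹) (by fun_prop) (by fun_prop)]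
  exact ENNReal.mul_lt_top nl_c1_one nl_c1_one

lemma nl_c2 : ∫⁻ y in (Metric.ball (0 : ℝ × ℝ) 1)ᶜ, (‖y‖ₑ⁻¹) ^ (4:ℝ) < ⊤ := by
  have h := finite_integral_one_add_norm (μ := (volume : Measure (ℝ × ℝ))) (r := 4) (by simp; norm_num)
  have hle : ∀ y ∈ (Metric.ball (0 : ℝ × ℝ) 1)ᶜ, (‖y‖ₑ⁻¹) ^ (4:ℝ) ≤
      16 * ENNReal.ofReal ((1 + ‖y‖) ^ (-4 : ℝ)) := by
    intro y hy
    have hy : 1 ≤ ‖y‖ := by simpa using hy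
    have hy0 : 0 < ‖y‖ := by linarith
    rw [← enorm_norm, Real.enorm_of_nonneg (norm_nonneg y), ← ENNReal.ofReal_inv_of_pos hy0, ENNReal.ofReal_rpow_of_pos (by positivity),
      show (16 : ℝ≥0∞) = ENNReal.ofReal 16 by simp, ← ENNReal.ofReal_mul (by norm_num)]
    apply ENNReal.ofReal_le_ofReal
    rw [Real.rpow_neg (by positivity), Real.inv_rpow hy0.le, show (4:ℝ) = (4:ℕ) by norm_num, Real.rpow_natCast, Real.rpow_natCast,
      ← div_eq_mul_inv, inv_eq_one_div, div_le_div_iff₀ (by positivity) (by positivity)]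
    have : (1 + ‖y‖)^4 ≤ (2*‖y‖)^4 := by gcongr; linarith
    nlinarith
  refine lt_of_le_of_lt (setLIntegral_mono' (by measurability) hle) ?_
  refine lt_of_le_of_lt (setLIntegral_le_lintegral _ _) ?_
  rw [lintegral_const_mul _ (by fun_prop)]
  exact ENNReal.mul_lt_top (by simp) h

/-- Scaled kernel integrals. -/
lemma nl_c1_scale (x : ℝ × ℝ) (ρ : ℝ) (hρ : 0 < ρ) :
    ∫⁻ y in Metric.ball x ρ, ‖y - x‖ₑ⁻¹ =
      ENNReal.ofReal ρ * ∫⁻ y in Metric.ball (0 : ℝ × ℝ) 1, ‖y‖ₑ⁻¹ := by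
  rw [← lintegral_indicator (by measurability), ← lintegral_indicator (by measurability),
    nl_scale _ (by apply Measurable.indicator; fun_prop; measurability) x ρ hρ]
  have : ∀ z : ℝ × ℝ, (Metric.ball x ρ).indicator (fun y => ‖y - x‖ₑ⁻¹) (x + ρ • z) =
     ENNReal.ofReal ρ⁻¹ * (Metric.ball (0 : ℝ × ℝ) 1).indicator (fun y => ‖y‖ₑ⁻¹) z := by
    intro z
    have hmem : x + ρ • z ∈ Metric.ball x ρ ↔ z ∈ Metric.ball (0 : ℝ × ℝ) 1 := by
      simp [norm_smul, abs_of_pos hρ, mul_lt_iff_lt_one_right hρ]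
    by_cases hz : z ∈ Metric.ball (0 : ℝ × ℝ) 1
    · rw [Set.indicator_of_mem hz, Set.indicator_of_mem (hmem.2 hz)]
      rw [add_sub_cancel_left, enorm_smul, ENNReal.mul_inv (Or.inr (by simp)) (Or.inl (by simp)), Real.enorm_of_nonneg hρ.le, ENNReal.ofReal_inv_of_pos hρ]
    · rw [Set.indicator_of_notMem hz, Set.indicator_of_notMem (fun h => hz (hmem.1 h)), mul_zero]
  simp_rw [this]
  rw [lintegral_const_mul _ (by apply Measurable.indicator; fun_prop; measurability), ← mul_assoc, ← ENNReal.ofReal_mul (by positivity)]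
  congr 2
  field_simp

lemma nl_c2_scale (x : ℝ × ℝ) (ρ : ℝ) (hρ : 0 < ρ) :
    ∫⁻ y in (Metric.ball x ρ)ᶜ, (‖y - x‖ₑ⁻¹) ^ (4:ℝ) =
      ENNReal.ofReal (ρ ^ (-2:ℝ)) * ∫⁻ y in (Metric.ball (0 : ℝ × ℝ) 1)ᶜ, (‖y‖ₑ⁻¹) ^ (4:ℝ) := by
  rw [← lintegral_indicator (by measurability), ← lintegral_indicator (by measurability),
    nl_scale _ (by apply Measurable.indicator; fun_prop; measurability) x ρ hρ]
  have : ∀ z : ℝ × ℝ, (Metric.ball x ρ)ᶜ.indicator (fun y => (‖y - x‖ₑ⁻¹) ^ (4:ℝ)) (x + ρ • z) =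
     ENNReal.ofReal (ρ⁻¹ ^ (4:ℝ)) * (Metric.ball (0 : ℝ × ℝ) 1)ᶜ.indicator (fun y => (‖y‖ₑ⁻¹) ^ (4:ℝ)) z := by
    intro z
    have hmem : x + ρ • z ∈ (Metric.ball x ρ)ᶜ ↔ z ∈ (Metric.ball (0 : ℝ × ℝ) 1)ᶜ := by
      simp [norm_smul, abs_of_pos hρ, hρ]
    by_cases hz : z ∈ (Metric.ball (0 : ℝ × ℝ) 1)ᶜ
    · rw [Set.indicator_of_mem hz, Set.indicator_of_mem (hmem.2 hz)]
      rw [add_sub_cancel_left, enorm_smul, ENNReal.mul_inv (Or.inr (by simp)) (Or.inl (by simp)), Real.enorm_of_nonneg hρ.le,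
        ENNReal.mul_rpow_of_nonneg _ _ (by norm_num), ← ENNReal.ofReal_inv_of_pos hρ, ENNReal.ofReal_rpow_of_pos (by positivity)]
    · rw [Set.indicator_of_notMem hz, Set.indicator_of_notMem (fun h => hz (hmem.1 h)), mul_zero]
  simp_rw [this]
  rw [lintegral_const_mul _ (by apply Measurable.indicator; fun_prop; measurability), ← mul_assoc, ← ENNReal.ofReal_mul (by positivity)]
  congr 2
  rw [Real.inv_rpow hρ.le, Real.rpow_neg hρ.le]
  norm_cast
  field_simp

/-- The constant in the fractional integration estimate. -/
def nlK : ℝ≥0∞ := (∫⁻ y in Metric.ball (0 : ℝ × ℝ) 1, ‖y‖ₑ⁻¹) +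
  (∫⁻ y in (Metric.ball (0 : ℝ × ℝ) 1)ᶜ, (‖y‖ₑ⁻¹) ^ (4:ℝ)) ^ (1/4:ℝ)

lemma nlK_lt_top : nlK < ⊤ := by
  unfold nlK
  exact ENNReal.add_lt_top.2 ⟨nl_c1, ENNReal.rpow_lt_top_of_nonneg (by norm_num) nl_c2.ne⟩

lemma nl_inner (g : ℝ × ℝ → ℝ≥0) (hg : Measurable g) (h1 : ∫⁻ y, (g y : ℝ≥0∞) ^ (4/3:ℝ) ≤ 1)
    (a : ℝ≥0) (x : ℝ × ℝ) :
    ∫⁻ y, (if g y ≤ a then (g y : ℝ≥0∞) else 0) * ‖y - x‖ₑ⁻¹ ≤ nlK * (a : ℝ≥0∞) ^ (1/3:ℝ) := by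
  rcases eq_or_ne a 0 with rfl | ha
  · have : ∀ y, (if g y ≤ 0 then (g y : ℝ≥0∞) else 0) * ‖y - x‖ₑ⁻¹ = 0 := by
      intro y; split_ifs with h
      · have : g y = 0 := le_antisymm h (by positivity)
        simp [this]
      · simp
    simp_rw [this]; simp
  have hap : 0 < (a:ℝ) := by positivity
  set ρ : ℝ := (a:ℝ) ^ (-(2/3):ℝ) with hρd
  have hρ : 0 < ρ := by positivity
  rw [← lintegral_add_compl _ (measurableSet_ball : MeasurableSet (Metric.ball x ρ)), nlK, add_mul]
  apply add_le_add
  · calc ∫⁻ y in Metric.ball x ρ, (if g y ≤ a then (g y : ℝ≥0∞) else 0) * ‖y - x‖ₑ⁻¹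
        ≤ ∫⁻ y in Metric.ball x ρ, (a : ℝ≥0∞) * ‖y - x‖ₑ⁻¹ := by
          apply lintegral_mono; intro y
          dsimp only
          gcongr
          split_ifs with h
          · exact_mod_cast h
          · positivity
      _ = (a : ℝ≥0∞) * (ENNReal.ofReal ρ * ∫⁻ y in Metric.ball (0 : ℝ × ℝ) 1, ‖y‖ₑ⁻¹) := by
          rw [lintegral_const_mul _ (by fun_prop), nl_c1_scale x ρ hρ]
      _ = (∫⁻ y in Metric.ball (0 : ℝ × ℝ) 1, ‖y‖ₑ⁻¹) * (a : ℝ≥0∞) ^ (1/3:ℝ) := by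
          rw [← mul_assoc, mul_comm]
          congr 1
          rw [← ENNReal.ofReal_coe_nnreal, ← ENNReal.ofReal_mul (by positivity), ENNReal.ofReal_rpow_of_pos hap]
          congr 1
          rw [hρd]
          nth_rewrite 1 [← Real.rpow_one (a:ℝ)]
          rw [← Real.rpow_add hap]; norm_num
      _ ≤ _ := le_rfl
  · calc ∫⁻ y in (Metric.ball x ρ)ᶜ, (if g y ≤ a then (g y : ℝ≥0∞) else 0) * ‖y - x‖ₑ⁻¹
        ≤ ∫⁻ y in (Metric.ball x ρ)ᶜ, ((fun y => (g y : ℝ≥0∞)) * fun y => ‖y - x‖ₑ⁻¹) y := by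
          apply lintegral_mono; intro y
          simp only [Pi.mul_apply]
          gcongr
          split_ifs with h
          · exact le_rfl
          · positivity
      _ ≤ (∫⁻ y in (Metric.ball x ρ)ᶜ, (g y : ℝ≥0∞) ^ (4/3:ℝ)) ^ (1/(4/3):ℝ) *
          (∫⁻ y in (Metric.ball x ρ)ᶜ, (‖y - x‖ₑ⁻¹) ^ (4:ℝ)) ^ (1/4:ℝ) := by
          apply ENNReal.lintegral_mul_le_Lp_mul_Lq
          · rw [Real.holderConjugate_iff]; norm_num
          · fun_prop
          · fun_prop
      _ ≤ 1 * (ENNReal.ofReal (ρ ^ (-2:ℝ)) * ∫⁻ y in (Metric.ball (0 : ℝ × ℝ) 1)ᶜ, (‖y‖ₑ⁻¹) ^ (4:ℝ)) ^ (1/4:ℝ) := by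
          rw [nl_c2_scale x ρ hρ]
          gcongr
          apply ENNReal.rpow_le_one _ (by norm_num)
          exact (setLIntegral_le_lintegral _ _).trans h1
      _ = _ := by
          rw [one_mul, ENNReal.mul_rpow_of_nonneg _ _ (by norm_num), mul_comm]
          congr 1
          rw [← ENNReal.ofReal_coe_nnreal, ENNReal.ofReal_rpow_of_pos (by positivity), ENNReal.ofReal_rpow_of_pos hap]
          congr 1
          rw [hρd, ← Real.rpow_mul hap.le, ← Real.rpow_mul hap.le]
          norm_num

lemma nl_half (f g : ℝ × ℝ → ℝ≥0) (hf : Measurable f) (hg : Measurable g)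
    (h0 : ∫⁻ y, (f y : ℝ≥0∞) ^ (4/3:ℝ) ≤ 1) (h1 : ∫⁻ y, (g y : ℝ≥0∞) ^ (4/3:ℝ) ≤ 1) :
    ∫⁻ x, ∫⁻ y, (f x : ℝ≥0∞) * ((if g y ≤ f x then (g y : ℝ≥0∞) else 0) * ‖y - x‖ₑ⁻¹) ≤ nlK := by
  calc _ ≤ ∫⁻ x, nlK * (f x : ℝ≥0∞) ^ (4/3:ℝ) := by
        apply lintegral_mono; intro x
        dsimp only
        rw [lintegral_const_mul' _ _ (by simp)]
        calc _ ≤ (f x : ℝ≥0∞) * (nlK * (f x : ℝ≥0∞) ^ (1/3:ℝ)) := by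
              gcongr; exact nl_inner g hg h1 (f x) x
          _ = nlK * ((f x : ℝ≥0∞) ^ (1:ℝ) * (f x : ℝ≥0∞) ^ (1/3:ℝ)) := by
              rw [ENNReal.rpow_one]; ring
          _ = _ := by
              rw [← ENNReal.rpow_add_of_nonneg _ _ (by norm_num) (by norm_num)]; norm_num
    _ = nlK * ∫⁻ x, (f x : ℝ≥0∞) ^ (4/3:ℝ) := by rw [lintegral_const_mul _ (by fun_prop)]
    _ ≤ nlK * 1 := by gcongr
    _ = nlK := mul_one _

lemma nl_hls1 (f g : ℝ × ℝ → ℝ≥0) (hf : Measurable f) (hg : Measurable g)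
    (h0 : ∫⁻ y, (f y : ℝ≥0∞) ^ (4/3:ℝ) ≤ 1) (h1 : ∫⁻ y, (g y : ℝ≥0∞) ^ (4/3:ℝ) ≤ 1) :
    ∫⁻ x, ∫⁻ y, (f x : ℝ≥0∞) * ((g y : ℝ≥0∞) * ‖y - x‖ₑ⁻¹) ≤ 2 * nlK := by
  have hm1 : Measurable fun p : (ℝ × ℝ) × (ℝ × ℝ) =>
      (f p.1 : ℝ≥0∞) * ((if g p.2 ≤ f p.1 then (g p.2 : ℝ≥0∞) else 0) * ‖p.2 - p.1‖ₑ⁻¹) := by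
    have : Measurable fun p : (ℝ × ℝ) × (ℝ × ℝ) => (if g p.2 ≤ f p.1 then (g p.2 : ℝ≥0∞) else 0) :=
      Measurable.ite (measurableSet_le (by fun_prop) (by fun_prop)) (by fun_prop) (by fun_prop)
    fun_prop
  have hm2 : Measurable fun p : (ℝ × ℝ) × (ℝ × ℝ) =>
      (g p.2 : ℝ≥0∞) * ((if f p.1 ≤ g p.2 then (f p.1 : ℝ≥0∞) else 0) * ‖p.1 - p.2‖ₑ⁻¹) := by
    have : Measurable fun p : (ℝ × ℝ) × (ℝ × ℝ) => (if f p.1 ≤ g p.2 then (f p.1 : ℝ≥0∞) else 0) :=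
      Measurable.ite (measurableSet_le (by fun_prop) (by fun_prop)) (by fun_prop) (by fun_prop)
    fun_prop
  calc _ ≤ ∫⁻ x, ∫⁻ y, ((f x : ℝ≥0∞) * ((if g y ≤ f x then (g y : ℝ≥0∞) else 0) * ‖y - x‖ₑ⁻¹) +
        (g y : ℝ≥0∞) * ((if f x ≤ g y then (f x : ℝ≥0∞) else 0) * ‖x - y‖ₑ⁻¹)) := by
        apply lintegral_mono; intro x
        apply lintegral_mono; intro y
        dsimp only
        rcases le_total (g y) (f x) with h | h
        · rw [if_pos h]; exact le_self_add
        · refine le_trans (le_of_eq ?_) le_add_self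
          rw [if_pos h, enorm_sub_rev]; ring
    _ = (∫⁻ x, ∫⁻ y, (f x : ℝ≥0∞) * ((if g y ≤ f x then (g y : ℝ≥0∞) else 0) * ‖y - x‖ₑ⁻¹)) +
        ∫⁻ x, ∫⁻ y, (g y : ℝ≥0∞) * ((if f x ≤ g y then (f x : ℝ≥0∞) else 0) * ‖x - y‖ₑ⁻¹) := by
        rw [← lintegral_add_left (hm1.lintegral_prod_right')]
        congr 1; ext x
        exact lintegral_add_left (hm1.comp ((measurable_const (a := x)).prodMk measurable_id)) _
    _ ≤ nlK + nlK := by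
        apply add_le_add (nl_half f g hf hg h0 h1)
        rw [lintegral_lintegral_swap hm2.aemeasurable]
        exact nl_half g f hg hf h1 h0
    _ = _ := by ring

lemma nl_hls (f g : ℝ × ℝ → ℝ≥0) (hf : Measurable f) (hg : Measurable g) (F G : ℝ≥0)
    (hF : 0 < F) (hG : 0 < G)
    (h0 : ∫⁻ y, (f y : ℝ≥0∞) ^ (4/3:ℝ) ≤ (F : ℝ≥0∞) ^ (4/3:ℝ))
    (h1 : ∫⁻ y, (g y : ℝ≥0∞) ^ (4/3:ℝ) ≤ (G : ℝ≥0∞) ^ (4/3:ℝ)) :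
    ∫⁻ x, ∫⁻ y, (f x : ℝ≥0∞) * ((g y : ℝ≥0∞) * ‖y - x‖ₑ⁻¹) ≤ 2 * nlK * F * G := by
  have key : ∀ (f : ℝ × ℝ → ℝ≥0) (F : ℝ≥0), 0 < F → Measurable f →
     ∫⁻ y, (f y : ℝ≥0∞) ^ (4/3:ℝ) ≤ (F : ℝ≥0∞) ^ (4/3:ℝ) →
     ∫⁻ y, ((F⁻¹ * f y : ℝ≥0) : ℝ≥0∞) ^ (4/3:ℝ) ≤ 1 := by
    intro f F hF hf h
    have hF0 : (F:ℝ≥0∞) ≠ 0 := by exact_mod_cast hF.ne'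
    have : ∀ y, ((F⁻¹ * f y : ℝ≥0) : ℝ≥0∞) ^ (4/3:ℝ) = ((F:ℝ≥0∞) ^ (4/3:ℝ))⁻¹ * (f y : ℝ≥0∞) ^ (4/3:ℝ) := by
      intro y
      rw [ENNReal.coe_mul, ENNReal.mul_rpow_of_nonneg _ _ (by norm_num), ENNReal.coe_inv hF.ne', ENNReal.inv_rpow]
    simp_rw [this]
    rw [lintegral_const_mul _ (by fun_prop)]
    calc _ ≤ ((F:ℝ≥0∞) ^ (4/3:ℝ))⁻¹ * (F:ℝ≥0∞) ^ (4/3:ℝ) := by gcongr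
      _ = 1 := ENNReal.inv_mul_cancel (by simp [hF.ne']) (by finiteness)
  have h := nl_hls1 (fun x => F⁻¹ * f x) (fun y => G⁻¹ * g y) (by fun_prop) (by fun_prop)
    (key f F hF hf h0) (key g G hG hg h1)
  have e : ∀ x y, (f x : ℝ≥0∞) * ((g y : ℝ≥0∞) * ‖y - x‖ₑ⁻¹) =
     (F * G : ℝ≥0) * (((F⁻¹ * f x : ℝ≥0) : ℝ≥0∞) * (((G⁻¹ * g y : ℝ≥0) : ℝ≥0∞) * ‖y - x‖ₑ⁻¹)) := by
    intro x y
    rw [← mul_assoc, ← mul_assoc, ← mul_assoc, ← ENNReal.coe_mul, ← ENNReal.coe_mul, ← ENNReal.coe_mul]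
    congr 2
    field_simp
  simp_rw [e]
  simp_rw [lintegral_const_mul' _ _ (ENNReal.coe_ne_top : ((F * G : ℝ≥0) : ℝ≥0∞) ≠ ⊤)]
  calc _ ≤ ((F * G : ℝ≥0) : ℝ≥0∞) * (2 * nlK) := by gcongr
    _ = _ := by rw [ENNReal.coe_mul]; ring

/-- The Cauchy-Riemann operator `∂x + i ∂y`. -/
def nlL (u : ℝ × ℝ → ℂ) (p : ℝ × ℝ) : ℂ := pdx u p + I * pdy u p

/-- Regularised Cauchy kernel. -/
def nlk (z : ℝ × ℝ) : ℂ := ((z.1 : ℂ) - I * z.2) * ((1 + z.1 ^ 2 + z.2 ^ 2 : ℝ) : ℂ)⁻¹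

lemma nlk_contDiff : ContDiff ℝ 1 nlk := by
  unfold nlk
  have h1 : ContDiff ℝ 1 (fun z : ℝ × ℝ => (z.1 : ℂ)) := Complex.ofRealCLM.contDiff.comp contDiff_fst
  have h2 : ContDiff ℝ 1 (fun z : ℝ × ℝ => (z.2 : ℂ)) := Complex.ofRealCLM.contDiff.comp contDiff_snd
  have h3 : ContDiff ℝ 1 (fun z : ℝ × ℝ => ((1 + z.1 ^ 2 + z.2 ^ 2 : ℝ) : ℂ)) :=
    Complex.ofRealCLM.contDiff.comp (f := fun z : ℝ × ℝ => 1 + z.1 ^ 2 + z.2 ^ 2) (by fun_prop)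
  refine (h1.sub (contDiff_const.mul h2)).mul (h3.inv ?_)
  intro z
  have : (0:ℝ) < 1 + z.1 ^ 2 + z.2 ^ 2 := by positivity
  exact_mod_cast this.ne'

lemma nl_pdx_eq {E : Type*} [NormedAddCommGroup E] [NormedSpace ℝ E] {f : ℝ × ℝ → E} {p : ℝ × ℝ} {d : E}
    (hf : DifferentiableAt ℝ f p) (h : HasDerivAt (fun t : ℝ => f (t, p.2)) d p.1) : pdx f p = d := by
  have h1 : HasDerivAt (fun t : ℝ => ((t, p.2) : ℝ × ℝ)) (1, 0) p.1 :=
    (hasDerivAt_id _).prodMk (hasDerivAt_const _ _)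
  have h2 := HasFDerivAt.comp_hasDerivAt (f := fun t : ℝ => ((t, p.2) : ℝ × ℝ)) p.1 (l := f) (l' := fderiv ℝ f p) hf.hasFDerivAt h1
  exact h2.unique h

lemma nl_pdy_eq {E : Type*} [NormedAddCommGroup E] [NormedSpace ℝ E] {f : ℝ × ℝ → E} {p : ℝ × ℝ} {d : E}
    (hf : DifferentiableAt ℝ f p) (h : HasDerivAt (fun t : ℝ => f (p.1, t)) d p.2) : pdy f p = d := by
  have h1 : HasDerivAt (fun t : ℝ => ((p.1, t) : ℝ × ℝ)) (0, 1) p.2 :=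
    (hasDerivAt_const _ _).prodMk (hasDerivAt_id _)
  have h2 := HasFDerivAt.comp_hasDerivAt (f := fun t : ℝ => ((p.1, t) : ℝ × ℝ)) p.2 (l := f) (l' := fderiv ℝ f p) hf.hasFDerivAt h1
  exact h2.unique h

lemma nlL_k (z : ℝ × ℝ) : nlL nlk z = 2 * (((1 + z.1 ^ 2 + z.2 ^ 2 : ℝ) : ℂ)⁻¹) ^ 2 := by
  have hd : DifferentiableAt ℝ nlk z := (nlk_contDiff.differentiable (by norm_num)) z
  obtain ⟨a, b⟩ := z
  have hp : (0:ℝ) < 1 + a ^ 2 + b ^ 2 := by positivity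
  have hp' : ((1 + a ^ 2 + b ^ 2 : ℝ) : ℂ) ≠ 0 := by exact_mod_cast hp.ne'
  have hx : HasDerivAt (fun t : ℝ => nlk (t, b))
      (1 * ((1 + a ^ 2 + b ^ 2 : ℝ) : ℂ)⁻¹ + ((a : ℂ) - I * b) * (-((2 * a : ℝ) : ℂ) / ((1 + a ^ 2 + b ^ 2 : ℝ) : ℂ) ^ 2)) a := by
    unfold nlk
    have h1 : HasDerivAt (fun t : ℝ => (t : ℂ) - I * b) 1 a := by
      simpa using (Complex.ofRealCLM.hasDerivAt (x := a)).sub_const (I * b)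
    have h2 : HasDerivAt (fun t : ℝ => (1 + t ^ 2 + b ^ 2 : ℝ)) (2 * a) a := by
      simpa using (((hasDerivAt_id a).pow 2).const_add 1).add_const (b ^ 2)
    exact h1.mul ((h2.ofReal_comp).inv hp')
  have hy : HasDerivAt (fun t : ℝ => nlk (a, t))
      ((-I) * ((1 + a ^ 2 + b ^ 2 : ℝ) : ℂ)⁻¹ + ((a : ℂ) - I * b) * (-((2 * b : ℝ) : ℂ) / ((1 + a ^ 2 + b ^ 2 : ℝ) : ℂ) ^ 2)) b := by
    unfold nlk
    have h1 : HasDerivAt (fun t : ℝ => (a : ℂ) - I * t) (-I) b := by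
      simpa using ((Complex.ofRealCLM.hasDerivAt (x := b)).const_mul I).const_sub (a : ℂ)
    have h2 : HasDerivAt (fun t : ℝ => (1 + a ^ 2 + t ^ 2 : ℝ)) (2 * b) b := by
      simpa using (((hasDerivAt_id b).pow 2).const_add (1 + a ^ 2))
    exact h1.mul ((h2.ofReal_comp).inv hp')
  rw [nlL, nl_pdx_eq hd hx, nl_pdy_eq hd hy]
  have e : (a:ℂ)^2 + (b:ℂ)^2 = ((1 + a ^ 2 + b ^ 2 : ℝ) : ℂ) - 1 := by push_cast; ring
  simp only []
  field_simp
  push_cast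
  ring_nf
  simp only [I_sq]
  ring

lemma nlk_enorm_le (z : ℝ × ℝ) : ‖nlk z‖ₑ ≤ ‖z‖ₑ⁻¹ := by
  rcases eq_or_ne z 0 with rfl | hz
  · simp
  have hz' : 0 < ‖z‖ := by positivity
  rw [← enorm_norm (nlk z), ← enorm_norm z, Real.enorm_of_nonneg (norm_nonneg _), Real.enorm_of_nonneg (norm_nonneg _),
    ← ENNReal.ofReal_inv_of_pos hz']
  apply ENNReal.ofReal_le_ofReal
  obtain ⟨a, b⟩ := z
  have hp : (0:ℝ) < 1 + a ^ 2 + b ^ 2 := by positivity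
  have hn : ‖(a : ℂ) - I * b‖ = Real.sqrt (a ^ 2 + b ^ 2) := by
    have : (a : ℂ) - I * b = ⟨a, -b⟩ := by apply Complex.ext <;> simp
    rw [this, Complex.norm_def, Complex.normSq_mk]; congr 1; ring
  have hs : ‖(a, b)‖ ≤ Real.sqrt (a ^ 2 + b ^ 2) := by
    rw [Prod.norm_mk, Real.norm_eq_abs, Real.norm_eq_abs]
    apply max_le
    · apply Real.abs_le_sqrt; nlinarith [sq_nonneg b]
    · apply Real.abs_le_sqrt; nlinarith [sq_nonneg a]
  unfold nlk
  rw [norm_mul, norm_inv, hn, Complex.norm_of_nonneg hp.le, ← div_eq_mul_inv, inv_eq_one_div, div_le_div_iff₀ hp hz']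
  have h2 : Real.sqrt (a ^ 2 + b ^ 2) ^ 2 = a ^ 2 + b ^ 2 := Real.sq_sqrt (by positivity)
  have h3 := Real.sqrt_nonneg (a ^ 2 + b ^ 2)
  nlinarith

/-- The approximate identity. -/
def nlrho (z : ℝ × ℝ) : ℝ := 2 * ((1 + z.1 ^ 2 + z.2 ^ 2)⁻¹) ^ 2

lemma nlrho_int : Integrable nlrho := by
  have h : Integrable (fun z : ℝ × ℝ => 2 * ((1 + z.1 ^ 2)⁻¹ * (1 + z.2 ^ 2)⁻¹)) :=
    ((integrable_inv_one_add_sq).mul_prod (integrable_inv_one_add_sq)).const_mul 2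
  refine h.mono' (by unfold nlrho; exact Measurable.aestronglyMeasurable (by fun_prop)) (Eventually.of_forall fun z => ?_)
  rw [nlrho, Real.norm_of_nonneg (by positivity)]
  rw [sq, ← mul_inv, ← mul_inv]
  have h1 : 1 + z.1 ^ 2 ≤ 1 + z.1 ^ 2 + z.2 ^ 2 := by nlinarith [sq_nonneg z.2]
  have h2 : 1 + z.2 ^ 2 ≤ 1 + z.1 ^ 2 + z.2 ^ 2 := by nlinarith [sq_nonneg z.1]
  have h3 := mul_le_mul h1 h2 (by positivity) (by positivity)
  have h4 := inv_anti₀ (by positivity) h3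
  linarith

lemma nlrho_pos : 0 < ∫ z, nlrho z := by
  rw [integral_pos_iff_support_of_nonneg (fun z => by unfold nlrho; positivity) nlrho_int]
  have : Function.support nlrho = Set.univ := by
    ext z; simp only [Function.mem_support, Set.mem_univ, iff_true]; unfold nlrho; positivity
  rw [this]; simp

lemma nl_ibp (v : ℝ × ℝ → ℂ) (hv : ContDiff ℝ 1 v) (hc : HasCompactSupport v) :
    ∫ z, v z * (nlrho z : ℂ) = - ∫ z, nlL v z * nlk z := by
  have hkc : Continuous nlk := nlk_contDiff.continuous
  have hvc : Continuous v := hv.continuous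
  have hdk : ∀ w : ℝ × ℝ, Continuous fun z => fderiv ℝ nlk z w := fun w =>
    (nlk_contDiff.continuous_fderiv (by norm_num)).clm_apply continuous_const
  have hdv : ∀ w : ℝ × ℝ, Continuous fun z => fderiv ℝ v z w := fun w =>
    (hv.continuous_fderiv (by norm_num)).clm_apply continuous_const
  have hcd : ∀ w : ℝ × ℝ, HasCompactSupport fun z => fderiv ℝ v z w := fun w => hc.fderiv_apply (𝕜 := ℝ) w
  have i1 : ∀ w : ℝ × ℝ, Integrable (fun z => fderiv ℝ v z w * nlk z) := fun w =>
    ((hdv w).mul hkc).integrable_of_hasCompactSupport ((hcd w).mul_right)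
  have i2 : ∀ w : ℝ × ℝ, Integrable (fun z => v z * fderiv ℝ nlk z w) := fun w =>
    (hvc.mul (hdk w)).integrable_of_hasCompactSupport (hc.mul_right)
  have i3 : Integrable (fun z => v z * nlk z) :=
    (hvc.mul hkc).integrable_of_hasCompactSupport (hc.mul_right)
  have key : ∀ w : ℝ × ℝ, ∫ z, v z * fderiv ℝ nlk z w = - ∫ z, fderiv ℝ v z w * nlk z := fun w =>
    integral_mul_fderiv_eq_neg_fderiv_mul_of_integrable (i1 w) (i2 w) i3
      (fun x _ => hv.differentiable (by norm_num) x) (fun x _ => nlk_contDiff.differentiable (by norm_num) x)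
  have e1 : ∀ z, v z * (nlrho z : ℂ) = v z * fderiv ℝ nlk z (1, 0) + I * (v z * fderiv ℝ nlk z (0, 1)) := by
    intro z
    have := nlL_k z
    unfold nlL pdx pdy at this
    rw [nlrho]; push_cast
    push_cast at this
    rw [← this]; ring
  have e2 : ∀ z, nlL v z * nlk z = fderiv ℝ v z (1, 0) * nlk z + I * (fderiv ℝ v z (0, 1) * nlk z) := by
    intro z; unfold nlL pdx pdy; ring
  simp_rw [e1, e2]
  rw [integral_add (i2 _) ((i2 _).const_mul _), integral_add (i1 _) ((i1 _).const_mul _), integral_const_mul, integral_const_mul,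
    key, key]
  ring

lemma nlL_scale (u : ℝ × ℝ → ℂ) (hu : ContDiff ℝ 1 u) (x : ℝ × ℝ) (t : ℝ) (z : ℝ × ℝ) :
    nlL (fun z => u (x + t • z)) z = t * nlL u (x + t • z) := by
  have h : HasFDerivAt (fun z : ℝ × ℝ => x + t • z) (t • ContinuousLinearMap.id ℝ (ℝ × ℝ)) z :=
    ((hasFDerivAt_id z).const_smul t).const_add x
  have h2 := HasFDerivAt.comp z (g := u) (g' := fderiv ℝ u (x + t • z)) (hu.differentiable (by norm_num) _).hasFDerivAt h
  have h3 : fderiv ℝ (fun z => u (x + t • z)) z = _ := h2.fderiv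
  unfold nlL pdx pdy
  rw [h3]
  simp only [ContinuousLinearMap.comp_smul, ContinuousLinearMap.comp_id, _root_.smul_apply, real_smul]
  ring

lemma nl_cauchy (u : ℝ × ℝ → ℂ) (hu : ContDiff ℝ 1 u) (hc : HasCompactSupport u) (x : ℝ × ℝ) :
    ENNReal.ofReal (∫ z, nlrho z) * ‖u x‖ₑ ≤ ∫⁻ y, ‖nlL u y‖ₑ * ‖y - x‖ₑ⁻¹ := by
  have hLc : Continuous (nlL u) := by
    unfold nlL pdx pdy
    have := hu.continuous_fderiv (by norm_num)
    exact (this.clm_apply continuous_const).add (continuous_const.mul (this.clm_apply continuous_const))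
  have hbound : ∀ t : ℝ, 0 < t → ‖∫ z, u (x + t • z) * (nlrho z : ℂ)‖ₑ ≤ ∫⁻ y, ‖nlL u y‖ₑ * ‖y - x‖ₑ⁻¹ := by
    intro t ht
    have hcs : HasCompactSupport (fun z => u (x + t • z)) := by
      have := hc.comp_homeomorph ((Homeomorph.smulOfNeZero t ht.ne').trans (Homeomorph.addLeft x))
      exact this
    rw [nl_ibp (fun z => u (x + t • z)) (hu.comp (by fun_prop)) hcs, enorm_neg]
    refine (enorm_integral_le_lintegral_enorm _).trans ?_
    rw [nl_scale (fun y => ‖nlL u y‖ₑ * ‖y - x‖ₑ⁻¹) (by have := hLc.measurable; fun_prop) x t ht, ← lintegral_const_mul' _ _ (by simp)]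
    apply lintegral_mono
    intro z
    dsimp only
    rw [nlL_scale u hu, enorm_mul, enorm_mul, add_sub_cancel_left, enorm_smul, ENNReal.mul_inv (Or.inr (by simp)) (Or.inl (by simp))]
    have e : ‖(t:ℂ)‖ₑ = ENNReal.ofReal t := by
      rw [← enorm_norm, Complex.norm_of_nonneg ht.le, Real.enorm_of_nonneg ht.le]
    rw [e, Real.enorm_of_nonneg ht.le]
    calc ENNReal.ofReal t * ‖nlL u (x + t • z)‖ₑ * ‖nlk z‖ₑ
        ≤ ENNReal.ofReal t * ‖nlL u (x + t • z)‖ₑ * ‖z‖ₑ⁻¹ := by gcongr; exact nlk_enorm_le z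
      _ = ENNReal.ofReal (t^2) * (ENNReal.ofReal t)⁻¹ * ‖nlL u (x + t • z)‖ₑ * ‖z‖ₑ⁻¹ := by
        congr 2
        rw [← ENNReal.ofReal_inv_of_pos ht, ← ENNReal.ofReal_mul (by positivity)]
        congr 1; field_simp
      _ = _ := by ring
  obtain ⟨B, hB⟩ := hc.exists_bound_of_continuous hu.continuous
  have hlim : Tendsto (fun t : ℝ => ∫ z, u (x + t • z) * (nlrho z : ℂ)) (nhdsWithin 0 (Set.Ioi 0))
      (nhds (∫ z, u x * (nlrho z : ℂ))) := by
    apply tendsto_integral_filter_of_dominated_convergence (fun z => B * nlrho z)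
    · refine Eventually.of_forall fun t => ?_
      have h1 := hu.continuous
      have h2 : Measurable nlrho := by unfold nlrho; fun_prop
      exact (Continuous.aestronglyMeasurable (by fun_prop)).mul (Measurable.aestronglyMeasurable (by fun_prop))
    · refine Eventually.of_forall fun t => Eventually.of_forall fun z => ?_
      have h0 : 0 ≤ nlrho z := by unfold nlrho; positivity
      rw [norm_mul, Complex.norm_of_nonneg h0]
      gcongr
      exact hB _
    · exact nlrho_int.const_mul B
    · refine Eventually.of_forall fun z => ?_
      refine Tendsto.mul_const _ ?_
      have : Tendsto (fun t : ℝ => u (x + t • z)) (nhds 0) (nhds (u (x + (0:ℝ) • z))) := by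
        have h1 := hu.continuous
        exact Continuous.tendsto (by fun_prop) 0
      simp only [zero_smul, add_zero] at this
      exact this.mono_left nhdsWithin_le_nhds
  have hfin := le_of_tendsto hlim.enorm (eventually_nhdsWithin_of_forall (fun t ht => hbound t ht))
  rw [integral_const_mul, integral_complex_ofReal, enorm_mul] at hfin
  have e : ‖((∫ z, nlrho z : ℝ) : ℂ)‖ₑ = ENNReal.ofReal (∫ z, nlrho z) := by
    rw [← enorm_norm, Complex.norm_of_nonneg nlrho_pos.le, Real.enorm_of_nonneg nlrho_pos.le]
  rw [e, mul_comm] at hfin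
  exact hfin

lemma nlL_continuous (u : ℝ × ℝ → ℂ) (hu : ContDiff ℝ 1 u) : Continuous (nlL u) := by
  unfold nlL pdx pdy
  have := hu.continuous_fderiv (by norm_num)
  exact (this.clm_apply continuous_const).add (continuous_const.mul (this.clm_apply continuous_const))

/-- The `L^{4/3} → L^4` estimate for the Cauchy-Riemann operator. -/
lemma nl_elliptic : ∃ K : ℝ≥0, ∀ u : ℝ × ℝ → ℂ, ContDiff ℝ 1 u → HasCompactSupport u →
    eLpNorm u 4 volume ≤ K * eLpNorm (nlL u) (4/3) volume := by
  have hcpos := nlrho_pos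
  set c : ℝ≥0∞ := ENNReal.ofReal (∫ z, nlrho z) with hc
  have hc0 : c ≠ 0 := by simpa [hc] using hcpos
  have hct : c ≠ ⊤ := by simp [hc]
  have hKt : c⁻¹ * (2 * nlK) ≠ ⊤ := ENNReal.mul_ne_top (by simpa using hc0) (ENNReal.mul_ne_top (by simp) nlK_lt_top.ne)
  refine ⟨(c⁻¹ * (2 * nlK)).toNNReal, fun u hu hcs => ?_⟩
  rw [ENNReal.coe_toNNReal hKt]
  have hLc := nlL_continuous u hu
  have huc := hu.continuous
  have h43 : (4/3 : ℝ≥0∞).toReal = 4/3 := by simp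
  have h43' : (4/3 : ℝ≥0∞) ≠ ⊤ := ENNReal.div_ne_top (by simp) (by simp)
  have h43'' : (4/3 : ℝ≥0∞) ≠ 0 := by simp
  set U : ℝ≥0∞ := ∫⁻ x, ‖u x‖ₑ ^ (4:ℝ) with hU
  have hUe : eLpNorm u 4 volume = U ^ (1/4:ℝ) := by
    rw [eLpNorm_eq_lintegral_rpow_enorm_toReal (by simp) (by simp)]; simp [hU]
  have hFe : eLpNorm (nlL u) (4/3) volume = (∫⁻ x, ‖nlL u x‖ₑ ^ (4/3:ℝ)) ^ (1/(4/3):ℝ) := by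
    rw [eLpNorm_eq_lintegral_rpow_enorm_toReal h43'' h43', h43]
  have hUt : U ≠ ⊤ := by
    have := (huc.memLp_of_hasCompactSupport (p := 4) (μ := volume) hcs).2
    rw [hUe] at this
    intro h; rw [h] at this; simp at this
  rw [hUe]
  rcases eq_or_ne U 0 with h0 | h0
  · rw [h0]; simp
  have hrt : U ^ (3/4:ℝ) ≠ ⊤ := ENNReal.rpow_ne_top_of_nonneg (by norm_num) hUt
  have hr0 : U ^ (3/4:ℝ) ≠ 0 := by simp [h0, hUt]
  have main : ∀ F : ℝ≥0, eLpNorm (nlL u) (4/3) volume < F → U ^ (1/4:ℝ) ≤ c⁻¹ * (2 * nlK) * F := by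
    intro F hF
    have hFpos : 0 < F := by
      have : (0:ℝ≥0∞) < F := lt_of_le_of_lt (by positivity) hF
      exact_mod_cast this
    have hG : ((U ^ (3/4:ℝ)).toNNReal : ℝ≥0∞) = U ^ (3/4:ℝ) := ENNReal.coe_toNNReal hrt
    have hls := nl_hls (fun x => ‖u x‖₊ ^ 3) (fun x => ‖nlL u x‖₊) (by have := huc.measurable; fun_prop)
      (by have := hLc.measurable; fun_prop) ((U ^ (3/4:ℝ)).toNNReal) F
      (ENNReal.toNNReal_pos hr0 hrt) hFpos (by
        rw [hG, ← ENNReal.rpow_mul]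
        norm_num
        apply le_of_eq
        rw [hU]
        congr 1; ext x
        rw [enorm_eq_nnnorm, ← ENNReal.rpow_natCast, ← ENNReal.rpow_mul]
        norm_num) (by
        rw [hFe] at hF
        have := ENNReal.rpow_le_rpow hF.le (by norm_num : (0:ℝ) ≤ 4/3)
        rw [← ENNReal.rpow_mul] at this
        norm_num at this
        exact this)
    have h1 : c * U ≤ 2 * nlK * U ^ (3/4:ℝ) * F := by
      rw [hG] at hls
      refine le_trans ?_ hls
      rw [hU, ← lintegral_const_mul' _ _ hct]
      apply lintegral_mono
      intro x
      dsimp only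
      rw [lintegral_const_mul' _ _ (by simp)]
      have := nl_cauchy u hu hcs x
      calc c * ‖u x‖ₑ ^ (4:ℝ) = ‖u x‖ₑ ^ 3 * (c * ‖u x‖ₑ) := by
            rw [show (4:ℝ) = (4:ℕ) by norm_num, ENNReal.rpow_natCast]; ring
        _ ≤ ‖u x‖ₑ ^ 3 * ∫⁻ y, ‖nlL u y‖ₑ * ‖y - x‖ₑ⁻¹ := by gcongr
        _ = _ := by simp [enorm_eq_nnnorm]
    have h2 : U = U ^ (1/4:ℝ) * U ^ (3/4:ℝ) := by
      rw [← ENNReal.rpow_add _ _ h0 hUt]; norm_num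
    calc U ^ (1/4:ℝ) = c⁻¹ * (c * (U ^ (1/4:ℝ) * U ^ (3/4:ℝ))) * (U ^ (3/4:ℝ))⁻¹ := by
          rw [← mul_assoc, ENNReal.inv_mul_cancel hc0 hct, one_mul, mul_assoc, ENNReal.mul_inv_cancel hr0 hrt, mul_one]
      _ = c⁻¹ * (c * U) * (U ^ (3/4:ℝ))⁻¹ := by rw [← h2]
      _ ≤ c⁻¹ * (2 * nlK * U ^ (3/4:ℝ) * F) * (U ^ (3/4:ℝ))⁻¹ := by gcongr
      _ = c⁻¹ * (2 * nlK) * F * (U ^ (3/4:ℝ) * (U ^ (3/4:ℝ))⁻¹) := by ring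
      _ = _ := by rw [ENNReal.mul_inv_cancel hr0 hrt, mul_one]
  have hFt : eLpNorm (nlL u) (4/3) volume < ⊤ := by
    have hcL : HasCompactSupport (nlL u) := by
      unfold nlL pdx pdy
      exact (hcs.fderiv_apply (𝕜 := ℝ) _).add ((hcs.fderiv_apply (𝕜 := ℝ) _).mul_left)
    exact (hLc.memLp_of_hasCompactSupport (p := 4/3) (μ := volume) hcL).2
  have hcont : Tendsto (fun s : ℝ≥0 => c⁻¹ * (2 * nlK) * ((eLpNorm (nlL u) (4/3) volume).toNNReal + s : ℝ≥0∞))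
      (nhdsWithin 0 (Set.Ioi 0)) (nhds (c⁻¹ * (2 * nlK) * ((eLpNorm (nlL u) (4/3) volume).toNNReal + (0 : ℝ≥0) : ℝ≥0∞))) := by
    refine ENNReal.Tendsto.const_mul ?_ (Or.inr hKt)
    refine Tendsto.mono_left ?_ nhdsWithin_le_nhds
    exact tendsto_const_nhds.add (ENNReal.continuous_coe.tendsto 0)
  rw [ENNReal.coe_zero, add_zero, ENNReal.coe_toNNReal hFt.ne] at hcont
  refine ge_of_tendsto hcont (eventually_nhdsWithin_of_forall fun s hs => ?_)
  have := main ((eLpNorm (nlL u) (4/3) volume).toNNReal + s) (by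
    rw [ENNReal.coe_add, ENNReal.coe_toNNReal hFt.ne]
    exact ENNReal.lt_add_right hFt.ne (by simpa using (ne_of_gt hs)))
  rw [ENNReal.coe_add, ENNReal.coe_toNNReal hFt.ne] at this
  exact this

/-- A fixed bump function, equal to `1` on the unit ball, supported in the ball of radius `2`. -/
def nlbump : ContDiffBump (0 : ℝ × ℝ) := ⟨1, 2, one_pos, one_lt_two⟩

/-- Rescaled bump function. -/
def nlchi (c : ℝ × ℝ) (ρ : ℝ) (x : ℝ × ℝ) : ℝ := nlbump (ρ⁻¹ • (x - c))

lemma nlchi_contDiff (c : ℝ × ℝ) (ρ : ℝ) : ContDiff ℝ 1 (nlchi c ρ) := by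
  have h : ContDiff ℝ 1 (nlbump : ℝ × ℝ → ℝ) := nlbump.contDiff
  exact h.comp (f := fun x : ℝ × ℝ => ρ⁻¹ • (x - c)) (by fun_prop)

lemma nl_norm_scaled (c : ℝ × ℝ) (ρ : ℝ) (hρ : 0 < ρ) (x : ℝ × ℝ) :
    ‖ρ⁻¹ • (x - c)‖ = ρ⁻¹ * dist x c := by
  rw [norm_smul, dist_eq_norm, Real.norm_of_nonneg (by positivity)]

lemma nlchi_one (c : ℝ × ℝ) (ρ : ℝ) (hρ : 0 < ρ) (x : ℝ × ℝ) (h : dist x c ≤ ρ) : nlchi c ρ x = 1 := by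
  apply nlbump.one_of_mem_closedBall
  rw [mem_closedBall_zero_iff, nl_norm_scaled c ρ hρ]
  change ρ⁻¹ * dist x c ≤ 1
  rw [inv_mul_le_iff₀ hρ]; linarith

lemma nlchi_zero (c : ℝ × ℝ) (ρ : ℝ) (hρ : 0 < ρ) (x : ℝ × ℝ) (h : 2 * ρ ≤ dist x c) : nlchi c ρ x = 0 := by
  apply nlbump.zero_of_le_dist
  rw [dist_zero_right, nl_norm_scaled c ρ hρ]
  change 2 ≤ ρ⁻¹ * dist x c
  rw [le_inv_mul_iff₀ hρ]; linarith

lemma nlchi_nonneg (c : ℝ × ℝ) (ρ : ℝ) (x : ℝ × ℝ) : 0 ≤ nlchi c ρ x := nlbump.nonneg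
lemma nlchi_le_one (c : ℝ × ℝ) (ρ : ℝ) (x : ℝ × ℝ) : nlchi c ρ x ≤ 1 := nlbump.le_one

/-- Closed (square) annulus. -/
def nlann (c : ℝ × ℝ) (a b : ℝ) : Set (ℝ × ℝ) := {x | a ≤ dist x c ∧ dist x c ≤ b}

lemma nlann_closed (c : ℝ × ℝ) (a b : ℝ) : IsClosed (nlann c a b) :=
  (isClosed_le (f := fun _ => a) (g := fun x => dist x c) (by fun_prop) (by fun_prop)).inter
    (isClosed_le (f := fun x => dist x c) (g := fun _ => b) (by fun_prop) (by fun_prop))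

lemma nlann_subset (c : ℝ × ℝ) (a b : ℝ) : nlann c a b ⊆ Metric.closedBall c b := fun _ hx => hx.2

lemma nlann_compact (c : ℝ × ℝ) (a b : ℝ) : IsCompact (nlann c a b) :=
  (isCompact_closedBall c b).of_isClosed_subset (nlann_closed c a b) (nlann_subset c a b)

lemma nlchi_fderiv : ∃ M : ℝ≥0, ∀ (c : ℝ × ℝ) (ρ : ℝ), 0 < ρ → ∀ x,
    ‖fderiv ℝ (nlchi c ρ) x‖ ≤ (nlann c ρ (2 * ρ)).indicator (fun _ => M / ρ) x := by
  have h : ContDiff ℝ 1 (nlbump : ℝ × ℝ → ℝ) := nlbump.contDiff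
  obtain ⟨M, hM⟩ := (nlbump.hasCompactSupport.fderiv (𝕜 := ℝ)).exists_bound_of_continuous (h.continuous_fderiv (by norm_num))
  refine ⟨⟨max M 0, le_max_right _ _⟩, fun c ρ hρ x => ?_⟩
  by_cases hx : x ∈ nlann c ρ (2 * ρ)
  · rw [Set.indicator_of_mem hx]
    have h1 : HasFDerivAt (fun z : ℝ × ℝ => ρ⁻¹ • (z - c)) (ρ⁻¹ • ContinuousLinearMap.id ℝ (ℝ × ℝ)) x :=
      ((hasFDerivAt_id x).sub_const c).const_smul ρ⁻¹
    have h2 := HasFDerivAt.comp x (g := nlbump) (h.differentiable (by norm_num) _).hasFDerivAt h1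
    have h3 : fderiv ℝ (nlchi c ρ) x = _ := h2.fderiv
    rw [h3, ContinuousLinearMap.comp_smul, ContinuousLinearMap.comp_id, norm_smul, Real.norm_of_nonneg (by positivity), mul_comm, ← div_eq_mul_inv]
    gcongr
    exact (hM _).trans (le_max_left _ _)
  · rw [Set.indicator_of_notMem hx]
    apply le_of_eq
    rw [norm_eq_zero]
    have hx' : dist x c < ρ ∨ 2 * ρ < dist x c := by
      by_contra hh; push Not at hh; exact hx hh
    rcases hx' with h1 | h1
    · have : nlchi c ρ =ᶠ[nhds x] fun _ => 1 := by
        filter_upwards [(isOpen_lt (by fun_prop) continuous_const : IsOpen {y | dist y c < ρ}).mem_nhds h1] with y hy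
        exact nlchi_one c ρ hρ y (le_of_lt hy)
      rw [this.fderiv_eq]; simp
    · have : nlchi c ρ =ᶠ[nhds x] fun _ => 0 := by
        filter_upwards [(isOpen_lt continuous_const (by fun_prop) : IsOpen {y | 2 * ρ < dist y c}).mem_nhds h1] with y hy
        exact nlchi_zero c ρ hρ y (le_of_lt hy)
      rw [this.fderiv_eq]; simp

/-- The cut-off function of the neck. -/
def nleta (c : ℝ × ℝ) (r δ : ℝ) (x : ℝ × ℝ) : ℝ := nlchi c δ x * (1 - nlchi c (r/2) x)

lemma nleta_contDiff (c : ℝ × ℝ) (r δ : ℝ) : ContDiff ℝ 1 (nleta c r δ) :=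
  (nlchi_contDiff c δ).mul (contDiff_const.sub (nlchi_contDiff c (r/2)))

lemma nleta_nonneg (c : ℝ × ℝ) (r δ : ℝ) (x : ℝ × ℝ) : 0 ≤ nleta c r δ x :=
  mul_nonneg (nlchi_nonneg _ _ _) (by linarith [nlchi_le_one c (r/2) x])

lemma nleta_one (c : ℝ × ℝ) (r δ : ℝ) (hr : 0 < r) (hδ : 0 < δ) (x : ℝ × ℝ) (hx : x ∈ nlann c r δ) :
    nleta c r δ x = 1 := by
  rw [nleta, nlchi_one c δ hδ x hx.2, nlchi_zero c (r/2) (by linarith) x (by linarith [hx.1])]; simp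

lemma nleta_zero (c : ℝ × ℝ) (r δ : ℝ) (hr : 0 < r) (hδ : 0 < δ) (x : ℝ × ℝ) (hx : x ∉ nlann c (r/2) (2*δ)) :
    nleta c r δ x = 0 := by
  have hx' : dist x c < r/2 ∨ 2 * δ < dist x c := by
    by_contra hh; push Not at hh; exact hx hh
  rcases hx' with h1 | h1
  · rw [nleta, nlchi_one c (r/2) (by linarith) x h1.le]; simp
  · rw [nleta, nlchi_zero c δ hδ x h1.le]; simp

lemma nleta_tsupport (c : ℝ × ℝ) (r δ : ℝ) (hr : 0 < r) (hδ : 0 < δ) :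
    tsupport (nleta c r δ) ⊆ nlann c (r/2) (2*δ) := by
  apply closure_minimal _ (nlann_closed _ _ _)
  intro x hx
  by_contra h
  exact hx (nleta_zero c r δ hr hδ x h)

lemma nleta_compact (c : ℝ × ℝ) (r δ : ℝ) (hr : 0 < r) (hδ : 0 < δ) : HasCompactSupport (nleta c r δ) :=
  (nlann_compact _ _ _).of_isClosed_subset (isClosed_tsupport _) (nleta_tsupport c r δ hr hδ)

lemma nleta_fderiv (M : ℝ≥0) (hM : ∀ (c : ℝ × ℝ) (ρ : ℝ), 0 < ρ → ∀ x,
    ‖fderiv ℝ (nlchi c ρ) x‖ ≤ (nlann c ρ (2 * ρ)).indicator (fun _ => M / ρ) x)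
    (c : ℝ × ℝ) (r δ : ℝ) (hr : 0 < r) (hδ : 0 < δ) (x : ℝ × ℝ) :
    ‖fderiv ℝ (nleta c r δ) x‖ ≤ (nlann c δ (2 * δ)).indicator (fun _ => M / δ) x +
      (nlann c (r/2) (2 * (r/2))).indicator (fun _ => M / (r/2)) x := by
  have h1 := ((nlchi_contDiff c δ).differentiable (by norm_num) x).hasFDerivAt
  have h2 := ((nlchi_contDiff c (r/2)).differentiable (by norm_num) x).hasFDerivAt
  have h3 := h1.mul (h2.const_sub 1)
  have h4 : fderiv ℝ (nleta c r δ) x = _ := h3.fderiv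
  rw [h4]
  refine (norm_add_le _ _).trans ?_
  rw [norm_smul, norm_smul, norm_neg, add_comm]
  have b1 := hM c δ hδ x
  have b2 := hM c (r/2) (by linarith) x
  have n1 : ‖nlchi c δ x‖ ≤ 1 := by
    rw [Real.norm_of_nonneg (nlchi_nonneg _ _ _)]; exact nlchi_le_one _ _ _
  have n2 : ‖1 - nlchi c (r/2) x‖ ≤ 1 := by
    rw [Real.norm_of_nonneg (by linarith [nlchi_le_one c (r/2) x])]; linarith [nlchi_nonneg c (r/2) x]
  have := norm_nonneg (fderiv ℝ (nlchi c δ) x)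
  have := norm_nonneg (fderiv ℝ (nlchi c (r/2)) x)
  apply add_le_add <;> nlinarith

lemma nl_prod_contDiff {D : Set (ℝ × ℝ)} (hD : IsOpen D) (η : ℝ × ℝ → ℝ) (hη : ContDiff ℝ 1 η)
    (hs : tsupport η ⊆ D) (a : ℝ × ℝ → ℂ) (ha : ContDiffOn ℝ 1 a D) :
    ContDiff ℝ 1 (fun x => η x • a x) := by
  rw [contDiff_iff_contDiffAt]
  intro x
  by_cases hx : x ∈ D
  · exact hη.contDiffAt.smul (ha.contDiffAt (hD.mem_nhds hx))
  · have h0 : x ∉ tsupport η := fun h => hx (hs h)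
    have : (fun x => η x • a x) =ᶠ[nhds x] fun _ => 0 := by
      have := notMem_tsupport_iff_eventuallyEq.1 h0
      filter_upwards [this] with y hy
      simp [hy]
    exact contDiffAt_const.congr_of_eventuallyEq this

lemma nl_prod_L {D : Set (ℝ × ℝ)} (hD : IsOpen D) (η : ℝ × ℝ → ℝ) (hη : ContDiff ℝ 1 η)
    (hη0 : ∀ x, 0 ≤ η x)
    (hs : tsupport η ⊆ D) (a : ℝ × ℝ → ℂ) (ha : ContDiffOn ℝ 1 a D) (w e : ℝ × ℝ → ℝ) (N : ℝ)
    (haw : ∀ x ∈ D, ‖a x‖ ≤ w x) (hLa : ∀ x ∈ D, ‖nlL a x‖ ≤ N * e x * w x) (x : ℝ × ℝ) :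
    ‖nlL (fun x => η x • a x) x‖ ≤ ‖N * e x * (η x * w x)‖ + ‖2 * ‖fderiv ℝ η x‖ * w x‖ := by
  by_cases hx : x ∈ D
  · have h1 := (hη.differentiable (by norm_num) x).hasFDerivAt
    have h2 := ((ha.contDiffAt (hD.mem_nhds hx)).differentiableAt (by norm_num)).hasFDerivAt
    have h3 : fderiv ℝ (fun x => η x • a x) x = _ := (h1.smul h2).fderiv
    have e1 : nlL (fun x => η x • a x) x = η x • nlL a x + ((fderiv ℝ η x (1,0) : ℂ) + I * fderiv ℝ η x (0,1)) * a x := by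
      unfold nlL pdx pdy
      rw [h3]
      simp
      ring
    rw [e1]
    have hn : ∀ v : ℝ × ℝ, ‖v‖ = 1 → ‖(fderiv ℝ η x v : ℂ)‖ ≤ ‖fderiv ℝ η x‖ := by
      intro v hv
      have := (fderiv ℝ η x).le_opNorm v
      rw [hv, mul_one] at this
      simpa using this
    have n1 := hn (1,0) (by simp)
    have n2 := hn (0,1) (by simp)
    have n3 : ‖(fderiv ℝ η x (1,0) : ℂ) + I * fderiv ℝ η x (0,1)‖ ≤ 2 * ‖fderiv ℝ η x‖ := by
      refine (norm_add_le _ _).trans ?_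
      rw [norm_mul, Complex.norm_I, one_mul]; linarith
    refine (norm_add_le _ _).trans (add_le_add ?_ ?_)
    · rw [norm_smul, Real.norm_of_nonneg (hη0 x)]
      refine le_trans ?_ (le_abs_self _)
      have := mul_le_mul_of_nonneg_left (hLa x hx) (hη0 x)
      linarith
    · rw [norm_mul]
      refine le_trans ?_ (le_abs_self _)
      exact mul_le_mul n3 (haw x hx) (norm_nonneg _) (by positivity)
  · have h0 : x ∉ tsupport η := fun h => hx (hs h)
    have : (fun x => η x • a x) =ᶠ[nhds x] fun _ => 0 := by
      have := notMem_tsupport_iff_eventuallyEq.1 h0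
      filter_upwards [this] with y hy
      simp [hy]
    have h4 : nlL (fun x => η x • a x) x = 0 := by
      unfold nlL pdx pdy
      rw [this.fderiv_eq]; simp
    rw [h4, norm_zero]; positivity

lemma nl_ann_vol (c : ℝ × ℝ) (ρ : ℝ) (hρ : 0 < ρ) : volume (nlann c ρ (2 * ρ)) ≤ ENNReal.ofReal ((4 * ρ) ^ 2) := by
  refine (measure_mono (nlann_subset c ρ (2*ρ))).trans ?_
  obtain ⟨a, b⟩ := c
  rw [← closedBall_prod_same, Measure.volume_eq_prod, Measure.prod_prod, Real.volume_closedBall, Real.volume_closedBall,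
    ← ENNReal.ofReal_mul (by positivity)]
  apply le_of_eq; congr 1; ring

instance nl_holder : ENNReal.HolderTriple 2 4 (4/3) where
  inv_add_inv_eq_inv := by
    rw [ENNReal.inv_div (by simp) (by simp)]
    rw [← ENNReal.toReal_eq_toReal_iff' (by simp) (ENNReal.div_ne_top (by simp) (by simp)), ENNReal.toReal_add (by simp) (by simp)]
    simp; norm_num

/-- Estimate of the cut-off term on a segment. -/
lemma nl_seg (c : ℝ × ℝ) (ρ : ℝ) (hρ : 0 < ρ) (M : ℝ≥0) (w : ℝ × ℝ → ℝ)
    (hw : ContinuousOn w (nlann c ρ (2 * ρ))) :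
    eLpNorm (fun x => 2 * (nlann c ρ (2 * ρ)).indicator (fun _ => (M:ℝ) / ρ) x * w x) (4/3) volume ≤
      ENNReal.ofReal (8 * M) * eLpNorm w 4 (volume.restrict (nlann c ρ (2 * ρ))) := by
  set S := nlann c ρ (2 * ρ) with hS
  have hSm : MeasurableSet S := (nlann_closed _ _ _).measurableSet
  have e : (fun x => 2 * S.indicator (fun _ => (M:ℝ) / ρ) x * w x) =
      (S.indicator (fun _ => 2 * ((M:ℝ) / ρ))) • (S.indicator w) := by
    ext x
    by_cases hx : x ∈ S <;> simp [hx]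
  rw [e]
  refine (eLpNorm_smul_le_mul_eLpNorm (p := 2) (q := 4) ?_ ?_).trans ?_
  · exact (aestronglyMeasurable_indicator_iff hSm).2 (hw.aestronglyMeasurable hSm)
  · exact (aestronglyMeasurable_const.indicator hSm)
  · rw [eLpNorm_indicator_eq_eLpNorm_restrict (f := w) hSm]
    gcongr
    rw [eLpNorm_indicator_const hSm (by simp) (by simp), Real.enorm_of_nonneg (by positivity)]
    calc _ ≤ ENNReal.ofReal (2 * (M / ρ)) * (ENNReal.ofReal ((4 * ρ) ^ 2)) ^ (1/(2:ℝ≥0∞).toReal) := by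
          gcongr
          exact nl_ann_vol c ρ hρ
      _ = _ := by
          rw [ENNReal.ofReal_rpow_of_pos (by positivity), ← ENNReal.ofReal_mul (by positivity)]
          congr 1
          simp only [ENNReal.toReal_ofNat]
          rw [← Real.sqrt_eq_rpow, Real.sqrt_sq (by positivity)]
          field_simp; ring

lemma nl_eta_w {D : Set (ℝ × ℝ)} (hD : IsOpen D) (η : ℝ × ℝ → ℝ) (hη : Continuous η)
    (hs : tsupport η ⊆ D) (w : ℝ × ℝ → ℝ) (hw : ContinuousOn w D) :
    Continuous (fun x => η x * w x) := by
  rw [continuous_iff_continuousAt]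
  intro x
  by_cases hx : x ∈ D
  · exact hη.continuousAt.mul (hw.continuousAt (hD.mem_nhds hx))
  · have h0 : x ∉ tsupport η := fun h => hx (hs h)
    have : (fun x => η x * w x) =ᶠ[nhds x] fun _ => 0 := by
      have := notMem_tsupport_iff_eventuallyEq.1 h0
      filter_upwards [this] with y hy
      simp [hy]
    exact continuousAt_const.congr this.symm

lemma nl_comp (K : ℝ≥0) (hK : ∀ u : ℝ × ℝ → ℂ, ContDiff ℝ 1 u → HasCompactSupport u →
    eLpNorm u 4 volume ≤ K * eLpNorm (nlL u) (4/3) volume)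
    (M : ℝ≥0) (hM : ∀ (c : ℝ × ℝ) (ρ : ℝ), 0 < ρ → ∀ x,
    ‖fderiv ℝ (nlchi c ρ) x‖ ≤ (nlann c ρ (2 * ρ)).indicator (fun _ => M / ρ) x)
    {D : Set (ℝ × ℝ)} (hD : IsOpen D) (c : ℝ × ℝ) (r δ : ℝ) (hr : 0 < r) (hrδ : r ≤ δ)
    (hball : Metric.closedBall c (2 * δ) ⊆ D)
    (a : ℝ × ℝ → ℂ) (ha : ContDiffOn ℝ 1 a D) (w e : ℝ × ℝ → ℝ) (N : ℝ≥0)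
    (hwc : ContinuousOn w D) (hec : ContinuousOn e D)
    (haw : ∀ x ∈ D, ‖a x‖ ≤ w x) (hLa : ∀ x ∈ D, ‖nlL a x‖ ≤ N * e x * w x) :
    eLpNorm (fun x => nleta c r δ x • a x) 4 volume ≤
      K * (N * eLpNorm e 2 (volume.restrict (nlann c (r/2) (2 * δ))) *
          eLpNorm (fun x => nleta c r δ x * w x) 4 volume +
        (ENNReal.ofReal (8 * M) * eLpNorm w 4 (volume.restrict (nlann c δ (2 * δ))) +
         ENNReal.ofReal (8 * M) * eLpNorm w 4 (volume.restrict (nlann c (r/2) (2 * (r/2)))))) := by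
  have hδ : 0 < δ := by linarith
  have hr2 : 0 < r / 2 := by linarith
  have hts : tsupport (nleta c r δ) ⊆ D :=
    (nleta_tsupport c r δ hr hδ).trans ((nlann_subset _ _ _).trans hball)
  have hηc := nleta_contDiff c r δ
  have hs1 : nlann c δ (2 * δ) ⊆ D := (nlann_subset _ _ _).trans hball
  have hs2 : nlann c (r/2) (2 * (r/2)) ⊆ D := fun x hx => hball (by
    have := hx.2; rw [Metric.mem_closedBall]; linarith)
  have hs3 : nlann c (r/2) (2 * δ) ⊆ D := (nlann_subset _ _ _).trans hball
  refine (hK _ (nl_prod_contDiff hD _ hηc hts a ha) ((nleta_compact c r δ hr hδ).smul_right)).trans ?_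
  gcongr
  set A := nlann c (r/2) (2 * δ) with hA
  have hAm : MeasurableSet A := (nlann_closed _ _ _).measurableSet
  set f1 : ℝ × ℝ → ℝ := (A.indicator (fun x => (N:ℝ) * e x)) • (fun x => nleta c r δ x * w x) with hf1
  set f2 : ℝ × ℝ → ℝ := fun x => 2 * (nlann c δ (2 * δ)).indicator (fun _ => (M:ℝ) / δ) x * w x with hf2
  set f3 : ℝ × ℝ → ℝ := fun x => 2 * (nlann c (r/2) (2 * (r/2))).indicator (fun _ => (M:ℝ) / (r/2)) x * w x with hf3
  have hηw := nl_eta_w hD _ hηc.continuous hts w hwc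
  have m0 : AEStronglyMeasurable (A.indicator (fun x => (N:ℝ) * e x)) volume :=
    (aestronglyMeasurable_indicator_iff hAm).2
      ((continuousOn_const.mul (hec.mono hs3)).aestronglyMeasurable hAm)
  have m1 : AEStronglyMeasurable f1 volume := m0.smul hηw.aestronglyMeasurable
  have mm : ∀ (S : Set (ℝ × ℝ)) (b : ℝ), MeasurableSet S → S ⊆ D →
      AEStronglyMeasurable (fun x => 2 * S.indicator (fun _ => b) x * w x) volume := by
    intro S b hS hSD
    have : (fun x => 2 * S.indicator (fun _ => b) x * w x) = S.indicator (fun x => 2 * b * w x) := by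
      ext x; by_cases hx : x ∈ S <;> simp [hx]
    rw [this]
    exact (aestronglyMeasurable_indicator_iff hS).2
      ((continuousOn_const.mul (hwc.mono hSD)).aestronglyMeasurable hS)
  have m2 : AEStronglyMeasurable f2 volume := mm _ _ (nlann_closed _ _ _).measurableSet hs1
  have m3 : AEStronglyMeasurable f3 volume := mm _ _ (nlann_closed _ _ _).measurableSet hs2
  have h143 : (1 : ℝ≥0∞) ≤ 4/3 := by
    rw [ENNReal.le_div_iff_mul_le (by simp) (by simp)]; norm_num
  calc eLpNorm (nlL fun x => nleta c r δ x • a x) (4/3) volume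
      ≤ eLpNorm (fun x => ‖f1 x‖ + (‖f2 x‖ + ‖f3 x‖)) (4/3) volume := by
        apply eLpNorm_mono_real
        intro x
        refine (nl_prod_L hD _ hηc (nleta_nonneg c r δ) hts a ha w e N haw hLa x).trans ?_
        apply add_le_add
        · by_cases hx : x ∈ A
          · simp [hf1, hx]
          · rw [nleta_zero c r δ hr hδ x hx]; simp
        · have hb := nleta_fderiv M hM c r δ hr hδ x
          have h20 : 0 ≤ (nlann c δ (2 * δ)).indicator (fun _ => (M:ℝ) / δ) x :=
            Set.indicator_nonneg (fun _ _ => by positivity) _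
          have h30 : 0 ≤ (nlann c (r/2) (2 * (r/2))).indicator (fun _ => (M:ℝ) / (r/2)) x :=
            Set.indicator_nonneg (fun _ _ => by positivity) _
          simp only [hf2, hf3, norm_mul, Real.norm_of_nonneg h20, Real.norm_of_nonneg h30, norm_norm]
          have := mul_le_mul_of_nonneg_right hb (norm_nonneg (w x))
          simp only [Real.norm_ofNat]
          nlinarith
    _ ≤ eLpNorm (fun x => ‖f1 x‖) (4/3) volume + eLpNorm (fun x => ‖f2 x‖ + ‖f3 x‖) (4/3) volume :=
        eLpNorm_add_le m1.norm (m2.norm.add m3.norm) h143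
    _ ≤ eLpNorm (fun x => ‖f1 x‖) (4/3) volume +
        (eLpNorm (fun x => ‖f2 x‖) (4/3) volume + eLpNorm (fun x => ‖f3 x‖) (4/3) volume) := by
        gcongr
        exact eLpNorm_add_le m2.norm m3.norm h143
    _ = eLpNorm f1 (4/3) volume + (eLpNorm f2 (4/3) volume + eLpNorm f3 (4/3) volume) := by
        rw [eLpNorm_norm, eLpNorm_norm, eLpNorm_norm]
    _ ≤ _ := by
        gcongr
        · refine (eLpNorm_smul_le_mul_eLpNorm (p := 2) (q := 4) hηw.aestronglyMeasurable m0).trans ?_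
          gcongr
          rw [eLpNorm_indicator_eq_eLpNorm_restrict (f := fun x => (N:ℝ) * e x) hAm]
          have := eLpNorm_const_smul_le (c := (N:ℝ)) (f := e) (p := 2) (μ := volume.restrict A)
          refine (le_of_eq ?_).trans (this.trans (le_of_eq ?_))
          · rfl
          · rw [Real.enorm_of_nonneg N.coe_nonneg]; simp
        · exact nl_seg c δ hδ M w (hwc.mono hs1)
        · exact nl_seg c (r/2) hr2 M w (hwc.mono hs2)

lemma nl_cl_norm (v : ℝ × ℝ) (s : Spinor) : ‖cl v s‖ ≤ (|v.1| + |v.2|) * ‖s‖ := by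
  unfold cl
  refine (norm_add_le _ _).trans ?_
  rw [norm_smul, norm_smul, Real.norm_eq_abs, Real.norm_eq_abs, add_mul]
  have h1 : ‖((-s.2 : ℂ), s.1)‖ = ‖s‖ := by
    rw [Prod.norm_def, Prod.norm_def, norm_neg, max_comm]
  have h2 : ‖(Complex.I * s.2, Complex.I * s.1)‖ = ‖s‖ := by
    rw [Prod.norm_def, Prod.norm_def]
    simp [max_comm]
  rw [h1, h2]

lemma nl_pd_le {K : ℕ} (φ : ℝ × ℝ → Fin K → ℝ) (p : ℝ × ℝ) (i : Fin K) :
    |pdx (fun q => φ q i) p| ≤ Real.sqrt (eDen φ p) ∧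
    |pdy (fun q => φ q i) p| ≤ Real.sqrt (eDen φ p) := by
  have h : (pdx (fun q => φ q i) p) ^ 2 + (pdy (fun q => φ q i) p) ^ 2 ≤ eDen φ p :=
    Finset.single_le_sum
      (f := fun i => (pdx (fun q => φ q i) p) ^ 2 + (pdy (fun q => φ q i) p) ^ 2)
      (fun _ _ => by positivity) (Finset.mem_univ i)
  constructor <;> apply Real.abs_le_sqrt <;> nlinarith [sq_nonneg (pdx (fun q => φ q i) p), sq_nonneg (pdy (fun q => φ q i) p)]

lemma nl_eDen_nonneg {K : ℕ} (φ : ℝ × ℝ → Fin K → ℝ) (p : ℝ × ℝ) : 0 ≤ eDen φ p :=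
  Finset.sum_nonneg fun _ _ => by positivity

lemma nl_dirac_bound {n : ℕ} {D : Set (ℝ × ℝ)} {φ : ℝ × ℝ → Fin (n + 1) → ℝ}
    {ψ : ℝ × ℝ → Fin (n + 1) → Spinor} (h : IsDiracHarmonicSphere n D φ ψ) (p : ℝ × ℝ) (hp : p ∈ D)
    (m : Fin (n + 1)) :
    ‖diracOp (fun q => ψ q m) p‖ ≤ (2 * (n + 1) : ℝ≥0) * Real.sqrt (eDen φ p) * ‖ψ p‖ := by
  obtain ⟨-, -, hs, -, hd, -⟩ := h
  rw [hd p hp m, norm_smul, norm_neg]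
  have h1 : ‖φ p m‖ ≤ 1 := by
    have : φ p m ^ 2 ≤ 1 := by
      rw [← hs p hp]
      exact Finset.single_le_sum (f := fun i => φ p i ^ 2) (fun _ _ => by positivity) (Finset.mem_univ m)
    rw [Real.norm_eq_abs]
    exact abs_le_one_iff_mul_self_le_one.2 (by nlinarith)
  have h2 : ‖∑ i, cl (gradc (fun q => φ q i) p) (ψ p i)‖ ≤ ∑ i : Fin (n + 1), 2 * Real.sqrt (eDen φ p) * ‖ψ p‖ := by
    refine norm_sum_le_of_le _ fun i _ => (nl_cl_norm _ _).trans ?_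
    obtain ⟨ha, hb⟩ := nl_pd_le φ p i
    apply mul_le_mul _ (norm_le_pi_norm _ _) (norm_nonneg _) (by positivity)
    simp only [gradc]; linarith
  rw [Finset.sum_const, Finset.card_univ, Fintype.card_fin, nsmul_eq_mul] at h2
  have h3 := norm_nonneg (∑ i, cl (gradc (fun q => φ q i) p) (ψ p i))
  push_cast at h2 ⊢
  nlinarith

lemma nl_dirac_fst (ψ : ℝ × ℝ → Spinor) (p : ℝ × ℝ) (h : DifferentiableAt ℝ ψ p) :
    nlL (fun q => (ψ q).1) p = (diracOp ψ p).2 := by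
  have h1 := h.hasFDerivAt.fst
  have e : fderiv ℝ (fun q => (ψ q).1) p = _ := h1.fderiv
  simp [nlL, diracOp, cl, pdx, pdy, e]

lemma nl_dirac_snd (ψ : ℝ × ℝ → Spinor) (p : ℝ × ℝ) (h : DifferentiableAt ℝ ψ p) :
    ‖nlL (fun q => (starRingEnd ℂ) (ψ q).2) p‖ = ‖(diracOp ψ p).1‖ := by
  have h1 := h.hasFDerivAt.snd
  have h2 := (Complex.conjCLE.toContinuousLinearMap.hasFDerivAt (x := (ψ p).2)).comp p h1
  have e : fderiv ℝ (fun q => (starRingEnd ℂ) (ψ q).2) p = _ := h2.fderiv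
  have : nlL (fun q => (starRingEnd ℂ) (ψ q).2) p = -(starRingEnd ℂ) (diracOp ψ p).1 := by
    simp [nlL, diracOp, cl, pdx, pdy, e]; ring
  rw [this, norm_neg, Complex.norm_conj]

lemma nl_sInner (s : Spinor) : sInner s s = ‖s.1‖ ^ 2 + ‖s.2‖ ^ 2 := by
  simp only [sInner, Complex.mul_conj, Complex.normSq_eq_norm_sq]
  norm_cast

lemma nl_psiSq_lower {K : ℕ} (ψ : ℝ × ℝ → Fin K → Spinor) (p : ℝ × ℝ) : ‖ψ p‖ ^ 2 ≤ psiSq ψ p := by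
  have h0 : 0 ≤ psiSq ψ p := Finset.sum_nonneg fun i _ => by rw [nl_sInner]; positivity
  have : ‖ψ p‖ ≤ Real.sqrt (psiSq ψ p) := by
    rw [pi_norm_le_iff_of_nonneg (Real.sqrt_nonneg _)]
    intro i
    apply Real.le_sqrt_of_sq_le
    have h1 : sInner (ψ p i) (ψ p i) ≤ psiSq ψ p :=
      Finset.single_le_sum (f := fun i => sInner (ψ p i) (ψ p i))
        (fun i _ => by rw [nl_sInner]; positivity) (Finset.mem_univ i)
    rw [nl_sInner] at h1
    refine le_trans ?_ h1
    rw [Prod.norm_def]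
    rcases max_cases ‖(ψ p i).1‖ ‖(ψ p i).2‖ with h | h <;> rw [h.1] <;> nlinarith [sq_nonneg ‖(ψ p i).1‖, sq_nonneg ‖(ψ p i).2‖]
  calc ‖ψ p‖ ^ 2 ≤ Real.sqrt (psiSq ψ p) ^ 2 := by gcongr
    _ = _ := Real.sq_sqrt h0

lemma nl_psiSq_upper {n : ℕ} (ψ : ℝ × ℝ → Fin (n + 1) → Spinor) (p : ℝ × ℝ) :
    0 ≤ psiSq ψ p ∧ psiSq ψ p ≤ 2 * (n + 1) * ‖ψ p‖ ^ 2 := by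
  refine ⟨Finset.sum_nonneg fun i _ => by rw [nl_sInner]; positivity, ?_⟩
  have : psiSq ψ p ≤ ∑ i : Fin (n + 1), 2 * ‖ψ p‖ ^ 2 := by
    apply Finset.sum_le_sum
    intro i _
    rw [nl_sInner]
    have h0 := norm_le_pi_norm (ψ p) i
    have h1 := (norm_fst_le (ψ p i)).trans h0
    have h2 := (norm_snd_le (ψ p i)).trans h0
    have := pow_le_pow_left₀ (norm_nonneg _) h1 2
    have := pow_le_pow_left₀ (norm_nonneg _) h2 2
    linarith
  rw [Finset.sum_const, Finset.card_univ, Fintype.card_fin, nsmul_eq_mul] at this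
  push_cast at this
  linarith

lemma nl_eDen_cont {K : ℕ} {D : Set (ℝ × ℝ)} (hD : IsOpen D) (φ : ℝ × ℝ → Fin K → ℝ)
    (h : ContDiffOn ℝ (⊤ : ℕ∞) φ D) : ContinuousOn (eDen φ) D := by
  unfold eDen pdx pdy
  refine continuousOn_finsetSum _ fun i _ => ?_
  have h1 : ContDiffOn ℝ (⊤ : ℕ∞) (fun q => φ q i) D := (contDiffOn_pi.1 h) i
  have h2 : ContinuousOn (fderiv ℝ (fun q => φ q i)) D := h1.continuousOn_fderiv_of_isOpen hD (by simp)
  exact ((h2.clm_apply continuousOn_const).pow 2).add ((h2.clm_apply continuousOn_const).pow 2)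

lemma nl_psiSq_cont {K : ℕ} {D : Set (ℝ × ℝ)} (ψ : ℝ × ℝ → Fin K → Spinor)
    (h : ContinuousOn ψ D) : ContinuousOn (psiSq ψ) D := by
  unfold psiSq
  refine continuousOn_finsetSum _ fun i _ => ?_
  simp only [nl_sInner]
  have h1 : ContinuousOn (fun q => ψ q i) D := (continuousOn_pi.1 h) i
  exact (h1.fst.norm.pow 2).add (h1.snd.norm.pow 2)

lemma nl_int_bound {F : Type*} [NormedAddCommGroup F] (A : Set (ℝ × ℝ)) (hA : IsCompact A)
    (w : ℝ × ℝ → F) (g : ℝ × ℝ → ℝ)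
    (hg : ContinuousOn g A) (hg0 : ∀ x ∈ A, 0 ≤ g x) (q : ℕ) (hq : q ≠ 0)
    (hwg : ∀ x ∈ A, ‖w x‖ ^ q ≤ g x) (ε : ℝ) (hi : ∫ x in A, g x ≤ ε) :
    eLpNorm w q (volume.restrict A) ≤ ENNReal.ofReal (ε ^ (1 / (q:ℝ))) := by
  have hAm : MeasurableSet A := hA.isClosed.measurableSet
  have hgi : Integrable g (volume.restrict A) := hg.integrableOn_compact hA
  have h0 : 0 ≤ᵐ[volume.restrict A] g := by
    filter_upwards [ae_restrict_mem hAm] with x hx using hg0 x hx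
  have hε : 0 ≤ ε := (integral_nonneg_of_ae h0).trans hi
  rw [eLpNorm_eq_lintegral_rpow_enorm_toReal (by exact_mod_cast hq) (by simp)]
  rw [← ENNReal.ofReal_rpow_of_nonneg hε (by positivity)]
  simp only [ENNReal.toReal_natCast]
  gcongr
  calc ∫⁻ x in A, ‖w x‖ₑ ^ (q:ℝ) ≤ ∫⁻ x in A, ENNReal.ofReal (g x) := by
        apply lintegral_mono_ae
        filter_upwards [ae_restrict_mem hAm] with x hx
        rw [ENNReal.rpow_natCast, ← ofReal_norm, ← ENNReal.ofReal_pow (norm_nonneg _)]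
        exact ENNReal.ofReal_le_ofReal (hwg x hx)
    _ = ENNReal.ofReal (∫ x in A, g x) := (ofReal_integral_eq_lintegral_ofReal hgi h0).symm
    _ ≤ _ := ENNReal.ofReal_le_ofReal hi

lemma nl_absorb (X Y t : ℝ≥0∞) (hX : X ≠ ⊤) (ht : t ≤ 1/2) (h : X ≤ t * X + Y) : X ≤ 2 * Y := by
  have h1 : X ≤ (1/2) * X + Y := h.trans (by gcongr)
  by_cases hY : Y = ⊤
  · simp [hY]
  lift X to ℝ≥0 using hX
  lift Y to ℝ≥0 using hY
  have h2 : ((1:ℝ≥0∞)/2) = ((1/2 : ℝ≥0) : ℝ≥0∞) := by simp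
  rw [h2] at h1
  norm_cast at h1 ⊢
  have h3 : (X:ℝ) ≤ 1/2 * X + Y := by exact_mod_cast h1
  have : (X:ℝ) ≤ 2 * Y := by linarith
  exact_mod_cast this

lemma nl_neck (K : ℝ≥0) (hK : ∀ u : ℝ × ℝ → ℂ, ContDiff ℝ 1 u → HasCompactSupport u →
    eLpNorm u 4 volume ≤ K * eLpNorm (nlL u) (4/3) volume)
    (M : ℝ≥0) (hM : ∀ (c : ℝ × ℝ) (ρ : ℝ), 0 < ρ → ∀ x,
    ‖fderiv ℝ (nlchi c ρ) x‖ ≤ (nlann c ρ (2 * ρ)).indicator (fun _ => M / ρ) x)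
    {n : ℕ} {D : Set (ℝ × ℝ)} (hD : IsOpen D) {φ : ℝ × ℝ → Fin (n + 1) → ℝ}
    {ψ : ℝ × ℝ → Fin (n + 1) → Spinor} (h : IsDiracHarmonicSphere n D φ ψ)
    (c : ℝ × ℝ) (r δ : ℝ) (hr : 0 < r) (hrδ : r ≤ δ)
    (hball : Metric.closedBall c (2 * δ) ⊆ D) (N : ℝ≥0) (hN : N = 2 * (n + 1))
    (hsmall : N * K * N * eLpNorm (fun x => Real.sqrt (eDen φ x)) 2
      (volume.restrict (nlann c (r/2) (2 * δ))) ≤ 1/2) (B : ℝ≥0∞)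
    (h1 : eLpNorm (fun x => ‖ψ x‖) 4 (volume.restrict (nlann c δ (2 * δ))) ≤ B)
    (h2 : eLpNorm (fun x => ‖ψ x‖) 4 (volume.restrict (nlann c (r/2) (2 * (r/2)))) ≤ B) :
    eLpNorm ψ 4 (volume.restrict (nlann c r δ)) ≤ (32 * N * K * M : ℝ≥0) * B := by
  have hδ : 0 < δ := by linarith
  have hts : tsupport (nleta c r δ) ⊆ D :=
    (nleta_tsupport c r δ hr hδ).trans ((nlann_subset _ _ _).trans hball)
  have hηc := nleta_contDiff c r δ
  have hφs := h.1
  have hψs := h.2.1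
  have hwc : ContinuousOn (fun x => ‖ψ x‖) D := hψs.continuousOn.norm
  have hec : ContinuousOn (fun x => Real.sqrt (eDen φ x)) D := (nl_eDen_cont hD φ hφs).sqrt
  have hψm : ∀ m, ContDiffOn ℝ 1 (fun q => ψ q m) D := fun m =>
    ((contDiffOn_pi.1 hψs) m).of_le (by exact_mod_cast le_top)
  have hdm : ∀ m, ∀ x ∈ D, DifferentiableAt ℝ (fun q => ψ q m) x := fun m x hx =>
    ((hψm m).contDiffAt (hD.mem_nhds hx)).differentiableAt (by norm_num)
  have ha : ∀ m, ContDiffOn ℝ 1 (fun q => (ψ q m).1) D := fun m => (hψm m).fst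
  have hb : ∀ m, ContDiffOn ℝ 1 (fun q => (starRingEnd ℂ) (ψ q m).2) D := fun m =>
    Complex.conjCLE.contDiff.comp_contDiffOn (hψm m).snd
  have hηw := nl_eta_w hD _ hηc.continuous hts _ hwc
  set X := eLpNorm (fun x => nleta c r δ x * ‖ψ x‖) 4 volume with hX
  set E := eLpNorm (fun x => Real.sqrt (eDen φ x)) 2 (volume.restrict (nlann c (r/2) (2 * δ))) with hE
  have hXtop : X ≠ ⊤ :=
    (hηw.memLp_of_hasCompactSupport ((nleta_compact c r δ hr hδ).mul_right)).2.ne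
  set T : ℝ≥0∞ := K * (N * E * X + (ENNReal.ofReal (8 * M) * B + ENNReal.ofReal (8 * M) * B)) with hT
  have hcomp : ∀ a : ℝ × ℝ → ℂ, ContDiffOn ℝ 1 a D → (∀ x ∈ D, ‖a x‖ ≤ ‖ψ x‖) →
      (∀ x ∈ D, ‖nlL a x‖ ≤ N * Real.sqrt (eDen φ x) * ‖ψ x‖) →
      eLpNorm (fun x => nleta c r δ x • a x) 4 volume ≤ T := by
    intro a ha1 ha2 ha3
    refine (nl_comp K hK M hM hD c r δ hr hrδ hball a ha1 _ _ N hwc hec ha2 ha3).trans ?_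
    rw [hT]
    gcongr
  have hA : ∀ m, eLpNorm (fun x => nleta c r δ x • (ψ x m).1) 4 volume ≤ T := by
    intro m
    refine hcomp _ (ha m) (fun x _ => (norm_fst_le _).trans (norm_le_pi_norm _ _)) fun x hx => ?_
    rw [nl_dirac_fst (fun q => ψ q m) x (hdm m x hx), hN]
    exact (norm_snd_le _).trans (nl_dirac_bound h x hx m)
  have hB : ∀ m, eLpNorm (fun x => nleta c r δ x • (starRingEnd ℂ) (ψ x m).2) 4 volume ≤ T := by
    intro m
    refine hcomp _ (hb m) (fun x _ => ?_) fun x hx => ?_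
    · rw [Complex.norm_conj]; exact (norm_snd_le _).trans (norm_le_pi_norm _ _)
    · rw [nl_dirac_snd (fun q => ψ q m) x (hdm m x hx), hN]
      exact (norm_fst_le _).trans (nl_dirac_bound h x hx m)
  have mA : ∀ m, AEStronglyMeasurable (fun x => ‖nleta c r δ x • (ψ x m).1‖) volume := fun m =>
    (nl_prod_contDiff hD _ hηc hts _ (ha m)).continuous.norm.aestronglyMeasurable
  have mB : ∀ m, AEStronglyMeasurable (fun x => ‖nleta c r δ x • (starRingEnd ℂ) (ψ x m).2‖) volume := fun m =>
    (nl_prod_contDiff hD _ hηc hts _ (hb m)).continuous.norm.aestronglyMeasurable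
  have hsum : X ≤ N * T := by
    calc X ≤ eLpNorm (∑ m : Fin (n + 1), ((fun x => ‖nleta c r δ x • (ψ x m).1‖) +
          (fun x => ‖nleta c r δ x • (starRingEnd ℂ) (ψ x m).2‖))) 4 volume := by
          apply eLpNorm_mono_real
          intro x
          have hη0 := nleta_nonneg c r δ x
          simp only [Finset.sum_apply, Pi.add_apply, norm_mul, norm_smul, norm_norm,
            Complex.norm_conj, ← mul_add, ← Finset.mul_sum]
          gcongr
          rw [pi_norm_le_iff_of_nonneg (Finset.sum_nonneg fun _ _ => by positivity)]
          intro i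
          refine le_trans ?_ (Finset.single_le_sum (f := fun i => ‖(ψ x i).1‖ + ‖(ψ x i).2‖)
            (fun _ _ => by positivity) (Finset.mem_univ i))
          rw [Prod.norm_def]
          exact max_le (by simp) (by simp)
      _ ≤ ∑ m : Fin (n + 1), eLpNorm ((fun x => ‖nleta c r δ x • (ψ x m).1‖) +
          (fun x => ‖nleta c r δ x • (starRingEnd ℂ) (ψ x m).2‖)) 4 volume :=
          eLpNorm_sum_le (fun m _ => (mA m).add (mB m)) (by norm_num)
      _ ≤ ∑ m : Fin (n + 1), (T + T) := by
          apply Finset.sum_le_sum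
          intro m _
          refine (eLpNorm_add_le (mA m) (mB m) (by norm_num)).trans ?_
          rw [eLpNorm_norm, eLpNorm_norm]
          exact add_le_add (hA m) (hB m)
      _ = N * T := by
          rw [Finset.sum_const, Finset.card_univ, Fintype.card_fin, nsmul_eq_mul, hN]
          push_cast
          ring
  have habs : X ≤ 2 * ((16 * N * K * M : ℝ≥0) * B) := by
    apply nl_absorb X _ _ hXtop hsmall
    refine hsum.trans (le_of_eq ?_)
    have h8 : ENNReal.ofReal (8 * M) = 8 * (M : ℝ≥0∞) := by
      rw [ENNReal.ofReal_mul (by norm_num)]; simp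
    rw [hT, h8]
    push_cast
    ring
  have hfin : eLpNorm ψ 4 (volume.restrict (nlann c r δ)) ≤ X := by
    refine le_trans ?_ (eLpNorm_mono_measure _ (Measure.restrict_le_self (s := nlann c r δ)))
    apply eLpNorm_mono_ae
    filter_upwards [ae_restrict_mem (nlann_closed c r δ).measurableSet] with x hx
    rw [nleta_one c r δ hr hδ x hx]; simp
  refine hfin.trans (habs.trans (le_of_eq ?_))
  push_cast
  ring

lemma nl_core (n : ℕ) (D : Set (ℝ × ℝ)) (hD : IsOpen D) (p₀ : ℝ × ℝ) (hp₀ : p₀ ∈ D)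
    (φk : ℕ → ℝ × ℝ → Fin (n + 1) → ℝ) (ψk : ℕ → ℝ × ℝ → Fin (n + 1) → Spinor)
    (hDH : ∀ k, IsDiracHarmonicSphere n D (φk k) (ψk k))
    (lam : ℕ → ℝ) (hlam : ∀ k, 0 < lam k) (hlam0 : Tendsto lam atTop (nhds 0))
    (xk : ℕ → ℝ × ℝ) (hxk : Tendsto xk atTop (nhds p₀))
    (hmap : ∀ ε > (0 : ℝ), ∃ R₀ > (0 : ℝ), ∃ δ₀ > (0 : ℝ), ∀ R ≥ R₀, ∀ δ, 0 < δ → δ ≤ δ₀ →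
      ∃ k₀ : ℕ, ∀ k ≥ k₀,
        (∫ x in neck (xk k) (lam k) R δ, eDen (φk k) x) ≤ ε)
    (hseg : ∀ ε > (0 : ℝ), ∃ R₀ > (0 : ℝ), ∃ δ₀ > (0 : ℝ), ∀ R ≥ R₀, ∀ δ, 0 < δ → δ ≤ δ₀ →
      ∃ k₀ : ℕ, ∀ k ≥ k₀, ∀ r : ℝ, lam k * R ≤ r → 2 * r ≤ δ →
        (∫ x in neck (xk k) (lam k) R δ ∩ {x | r ≤ dist x (xk k) ∧ dist x (xk k) ≤ 2 * r},
          (eDen (φk k) x + (psiSq (ψk k) x) ^ 2)) ≤ ε) :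
    ∃ C : ℝ≥0, ∀ ε > (0 : ℝ), ∃ R₀ > (0 : ℝ), ∃ δ₀ > (0 : ℝ), ∀ R ≥ R₀, ∀ δ, 0 < δ → δ ≤ δ₀ →
        ∃ k₀ : ℕ, ∀ k ≥ k₀, neck (xk k) (lam k) R δ ⊆ D ∧
          eLpNorm (ψk k) 4 (volume.restrict (neck (xk k) (lam k) R δ)) ≤
            C * ENNReal.ofReal (ε ^ (1 / 4 : ℝ)) := by
  obtain ⟨K, hK⟩ := nl_elliptic
  obtain ⟨M, hM⟩ := nlchi_fderiv
  obtain ⟨N, hN⟩ : ∃ N : ℝ≥0, N = 2 * (n + 1) := ⟨_, rfl⟩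
  refine ⟨32 * N * K * M, fun ε hε => ?_⟩
  set Q : ℝ≥0 := N * K * N with hQ
  set s : ℝ := 1 / (2 * (Q + 1)) with hs
  have hs0 : 0 < s := by positivity
  obtain ⟨R1, hR1, δ1, hδ1, H1⟩ := hmap (s ^ 2) (by positivity)
  obtain ⟨R2, hR2, δ2, hδ2, H2⟩ := hseg ε hε
  obtain ⟨ρ, hρ, hρD⟩ := Metric.nhds_basis_closedBall.mem_iff.1 (hD.mem_nhds hp₀)
  refine ⟨2 * max R1 R2, by positivity, min (min δ1 δ2 / 2) (ρ / 4), by positivity, fun R hR δ hδ hδ' => ?_⟩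
  have hRa : R1 ≤ R / 2 := by linarith [le_max_left R1 R2]
  have hRb : R2 ≤ R / 2 := by linarith [le_max_right R1 R2]
  have hRpos : 0 < R := by linarith
  have hd1 : 2 * δ ≤ δ1 := by linarith [min_le_left δ1 δ2, hδ'.trans (min_le_left _ _)]
  have hd2 : 2 * δ ≤ δ2 := by linarith [min_le_right δ1 δ2, hδ'.trans (min_le_left _ _)]
  have hd3 : δ ≤ ρ / 4 := hδ'.trans (min_le_right _ _)
  obtain ⟨k1, hk1⟩ := H1 (R / 2) hRa (2 * δ) (by linarith) hd1
  obtain ⟨k2, hk2⟩ := H2 (R / 2) hRb (2 * δ) (by linarith) hd2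
  obtain ⟨k3, hk3⟩ := (Metric.tendsto_atTop.1 hxk) (ρ / 2) (by positivity)
  obtain ⟨k4, hk4⟩ := (Metric.tendsto_atTop.1 hlam0) (δ / R) (by positivity)
  refine ⟨max (max k1 k2) (max k3 k4), fun k hk => ?_⟩
  have g1 := hk1 k (by omega)
  have g2 := hk2 k (by omega)
  have g3 := hk3 k (by omega)
  have g4 := hk4 k (by omega)
  rw [Real.dist_eq, sub_zero, abs_of_pos (hlam k), lt_div_iff₀ hRpos] at g4
  have hr : 0 < lam k * R := mul_pos (hlam k) hRpos
  have hball : Metric.closedBall (xk k) (2 * δ) ⊆ D := by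
    refine (Metric.closedBall_subset_closedBall' ?_).trans hρD
    linarith
  have hsub : ∀ a b, b ≤ 2 * δ → nlann (xk k) a b ⊆ D := fun a b hb =>
    (nlann_subset _ _ _).trans ((Metric.closedBall_subset_closedBall hb).trans hball)
  have hec := nl_eDen_cont hD _ (hDH k).1
  have hpc := nl_psiSq_cont _ (hDH k).2.1.continuousOn
  have hann : nlann (xk k) (lam k * R / 2) (2 * δ) = neck (xk k) (lam k) (R / 2) (2 * δ) := by
    ext x; simp only [nlann, neck, mul_div_assoc]
  have hsegb : ∀ r : ℝ, lam k * (R / 2) ≤ r → 2 * r ≤ 2 * δ →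
      eLpNorm (fun x => ‖ψk k x‖) 4 (volume.restrict (nlann (xk k) r (2 * r))) ≤
        ENNReal.ofReal (ε ^ (1 / 4 : ℝ)) := by
    intro r hr1 hr2
    have hi := g2 r hr1 hr2
    have he : neck (xk k) (lam k) (R / 2) (2 * δ) ∩ {x | r ≤ dist x (xk k) ∧ dist x (xk k) ≤ 2 * r} =
        nlann (xk k) r (2 * r) :=
      Set.inter_eq_right.2 fun x hx => ⟨hr1.trans hx.1, hx.2.trans hr2⟩
    rw [he] at hi
    have := nl_int_bound (nlann (xk k) r (2 * r)) (nlann_compact _ _ _) (fun x => ‖ψk k x‖) _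
      ((hec.add (hpc.pow 2)).mono (hsub _ _ hr2))
      (fun x _ => add_nonneg (nl_eDen_nonneg _ _) (sq_nonneg _)) 4 (by norm_num)
      (fun x _ => by
        have h1 := nl_psiSq_lower (ψk k) x
        have h2 := nl_eDen_nonneg (φk k) x
        have h3 := pow_le_pow_left₀ (by positivity) h1 2
        rw [norm_norm]
        simp only [Pi.add_apply, Pi.pow_apply]
        nlinarith) ε hi
    exact_mod_cast this
  have hmapb : eLpNorm (fun x => Real.sqrt (eDen (φk k) x)) 2
      (volume.restrict (nlann (xk k) (lam k * R / 2) (2 * δ))) ≤ ENNReal.ofReal s := by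
    rw [← hann] at g1
    have := nl_int_bound _ (nlann_compact _ _ _) (fun x => Real.sqrt (eDen (φk k) x)) _
      (hec.mono (hsub _ _ le_rfl)) (fun x _ => nl_eDen_nonneg _ _) 2 (by norm_num)
      (fun x _ => by
        rw [Real.norm_of_nonneg (Real.sqrt_nonneg _), Real.sq_sqrt (nl_eDen_nonneg _ _)]) _ g1
    have hss : (s ^ 2) ^ (1 / ((2 : ℕ) : ℝ)) = s := by
      rw [one_div, Real.pow_rpow_inv_natCast hs0.le (by norm_num)]
    rw [hss] at this
    exact_mod_cast this
  refine ⟨hsub _ _ (by linarith), ?_⟩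
  refine nl_neck K hK M hM hD (hDH k) (xk k) (lam k * R) δ hr g4.le hball N hN ?_ _
    (hsegb δ (by linarith) le_rfl) ?_
  · calc _ ≤ (N * K * N : ℝ≥0∞) * ENNReal.ofReal s := by gcongr
      _ = ENNReal.ofReal (Q * s) := by
        rw [ENNReal.ofReal_mul (by positivity), ENNReal.ofReal_coe_nnreal, hQ]; push_cast; rfl
      _ ≤ ENNReal.ofReal (1 / 2) := by
        apply ENNReal.ofReal_le_ofReal
        have : (0:ℝ) ≤ Q := Q.coe_nonneg
        rw [hs, mul_one_div, div_le_div_iff₀ (by positivity) (by norm_num)]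
        linarith
      _ = 1 / 2 := by
        rw [ENNReal.ofReal_div_of_pos (by norm_num)]; simp
  · exact hsegb (lam k * R / 2) (by linarith) (by linarith)

/-- **No energy loss of the spinors on necks.**
Let `(φ_k,ψ_k)` be smooth Dirac-harmonic maps from (a coordinate domain `D` of) `M` to
`S^n` with energies `E(φ_k,ψ_k) ≤ Λ`, blowing up at the point `p₀` with a single bubble,
with scales `λ_k → 0`, centers `x_k → p₀` and neck annuli
`A(δ,R,k) = {x : λ_k R ≤ |x-x_k| ≤ δ}`.  The hypotheses record the vanishing of the
map-energy on the necks and the absence of energy concentration on unit segments of the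
conformal cylinder (estimate (c16) of the paper, here in dyadic-annulus form).  Then for
`k, R` large and `δ` small, `‖ψ_k‖_{L⁴(A(δ,R,k))} ≤ C√ε + C ε^{1/4}`; consequently
`lim_{R→∞} lim_{δ→0} lim_{k→∞} E(ψ_k; A(δ,R,k)) = 0`, where `E(ψ_k;A) = ∫_A |ψ_k|⁴`. -/
theorem no_energy_loss_on_necks_spinors
    (n : ℕ) (D : Set (ℝ × ℝ)) (hD : IsOpen D) (p₀ : ℝ × ℝ) (hp₀ : p₀ ∈ D)
    (Λ : ℝ)
    (φk : ℕ → ℝ × ℝ → Fin (n + 1) → ℝ) (ψk : ℕ → ℝ × ℝ → Fin (n + 1) → Spinor)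
    (hDH : ∀ k, IsDiracHarmonicSphere n D (φk k) (ψk k))
    (hE : ∀ k, (∫ x in D, (eDen (φk k) x + (psiSq (ψk k) x) ^ 2)) ≤ Λ)
    (lam : ℕ → ℝ) (hlam : ∀ k, 0 < lam k) (hlam0 : Tendsto lam atTop (nhds 0))
    (xk : ℕ → ℝ × ℝ) (hxk : Tendsto xk atTop (nhds p₀))
    -- no energy loss of the maps on the necks (single bubble at `p₀`)
    (hmap : ∀ ε > (0 : ℝ), ∃ R₀ > (0 : ℝ), ∃ δ₀ > (0 : ℝ), ∀ R ≥ R₀, ∀ δ, 0 < δ → δ ≤ δ₀ →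
      ∃ k₀ : ℕ, ∀ k ≥ k₀,
        (∫ x in neck (xk k) (lam k) R δ, eDen (φk k) x) ≤ ε)
    -- no concentration of energy on unit segments of the conformal cylinder (c16),
    -- stated on the corresponding dyadic annuli
    (hseg : ∀ ε > (0 : ℝ), ∃ R₀ > (0 : ℝ), ∃ δ₀ > (0 : ℝ), ∀ R ≥ R₀, ∀ δ, 0 < δ → δ ≤ δ₀ →
      ∃ k₀ : ℕ, ∀ k ≥ k₀, ∀ r : ℝ, lam k * R ≤ r → 2 * r ≤ δ →
        (∫ x in neck (xk k) (lam k) R δ ∩ {x | r ≤ dist x (xk k) ∧ dist x (xk k) ≤ 2 * r},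
          (eDen (φk k) x + (psiSq (ψk k) x) ^ 2)) ≤ ε) :
    ∃ C > (0 : ℝ),
      -- `‖ψ_k‖_{L⁴(A(δ,R,k))} ≤ C√ε + Cε^{1/4}` for `k, R` large and `δ` small
      (∀ ε > (0 : ℝ), ∃ R₀ > (0 : ℝ), ∃ δ₀ > (0 : ℝ), ∀ R ≥ R₀, ∀ δ, 0 < δ → δ ≤ δ₀ →
        ∃ k₀ : ℕ, ∀ k ≥ k₀,
          eLpNorm (ψk k) 4 (volume.restrict (neck (xk k) (lam k) R δ)) ≤
            ENNReal.ofReal (C * Real.sqrt ε + C * ε ^ (1 / 4 : ℝ))) ∧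
      -- hence `lim_{R→∞} lim_{δ→0} lim_{k→∞} E(ψ_k; A(δ,R,k)) = 0`
      (∀ ε > (0 : ℝ), ∃ R₀ > (0 : ℝ), ∃ δ₀ > (0 : ℝ), ∀ R ≥ R₀, ∀ δ, 0 < δ → δ ≤ δ₀ →
        ∃ k₀ : ℕ, ∀ k ≥ k₀,
          (∫ x in neck (xk k) (lam k) R δ, (psiSq (ψk k) x) ^ 2) ≤ ε) := by
  obtain ⟨C, hC⟩ := nl_core n D hD p₀ hp₀ φk ψk hDH lam hlam hlam0 xk hxk hmap hseg
  refine ⟨C + 1, by positivity, ?_, ?_⟩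
  · intro ε hε
    obtain ⟨R₀, hR₀, δ₀, hδ₀, H⟩ := hC ε hε
    refine ⟨R₀, hR₀, δ₀, hδ₀, fun R hR δ hδ hδ' => ?_⟩
    obtain ⟨k₀, hk₀⟩ := H R hR δ hδ hδ'
    refine ⟨k₀, fun k hk => (hk₀ k hk).2.trans ?_⟩
    rw [← ENNReal.ofReal_coe_nnreal, ← ENNReal.ofReal_mul C.coe_nonneg]
    apply ENNReal.ofReal_le_ofReal
    have h1 : 0 ≤ ε ^ (1 / 4 : ℝ) := by positivity
    have h2 : 0 ≤ (C + 1 : ℝ) * Real.sqrt ε := by positivity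
    nlinarith
  · intro ε hε
    set P : ℝ := (2 * (n + 1)) ^ 2 with hP
    set S : ℝ := P * ((C : ℝ) ^ 4 + 1) with hS
    have hPpos : 0 < P := by positivity
    have hSpos : 0 < S := by positivity
    obtain ⟨R₀, hR₀, δ₀, hδ₀, H⟩ := hC (ε / S) (by positivity)
    refine ⟨R₀, hR₀, δ₀, hδ₀, fun R hR δ hδ hδ' => ?_⟩
    obtain ⟨k₀, hk₀⟩ := H R hR δ hδ hδ'
    refine ⟨k₀, fun k hk => ?_⟩
    obtain ⟨hsub, hb⟩ := hk₀ k hk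
    have hcpt : IsCompact (neck (xk k) (lam k) R δ) := nlann_compact (xk k) (lam k * R) δ
    have hwc : ContinuousOn (fun x => P * ‖ψk k x‖ ^ 4) (neck (xk k) (lam k) R δ) :=
      continuousOn_const.mul (((hDH k).2.1.continuousOn.mono hsub).norm.pow 4)
    have hpc := (nl_psiSq_cont _ (hDH k).2.1.continuousOn).mono hsub
    have hψc := (hDH k).2.1.continuousOn.mono hsub
    have hmle : ∫ x in neck (xk k) (lam k) R δ, (psiSq (ψk k) x) ^ 2 ≤
        ∫ x in neck (xk k) (lam k) R δ, P * ‖ψk k x‖ ^ 4 := by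
      apply integral_mono ((hpc.pow 2).integrableOn_compact hcpt) (hwc.integrableOn_compact hcpt)
      intro x
      obtain ⟨h0, h1⟩ := nl_psiSq_upper (ψk k) x
      have := pow_le_pow_left₀ h0 h1 2
      simp only [hP, Pi.pow_apply]
      nlinarith
    refine hmle.trans ?_
    rw [integral_const_mul]
    have hInt4 : ∫ x in neck (xk k) (lam k) R δ, ‖ψk k x‖ ^ 4 ≤ (C:ℝ) ^ 4 * (ε / S) := by
      have h1 : ENNReal.ofReal (∫ x in neck (xk k) (lam k) R δ, ‖ψk k x‖ ^ 4) =
          eLpNorm (ψk k) 4 (volume.restrict (neck (xk k) (lam k) R δ)) ^ 4 := by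
        rw [ofReal_integral_eq_lintegral_ofReal (f := fun x => ‖ψk k x‖ ^ 4) ((hψc.norm.pow 4).integrableOn_compact hcpt)
          (ae_of_all _ fun x => by positivity)]
        rw [eLpNorm_eq_lintegral_rpow_enorm_toReal (by norm_num) (by norm_num)]
        rw [← ENNReal.rpow_natCast, ← ENNReal.rpow_mul]
        norm_num
      have h2 : ENNReal.ofReal (∫ x in neck (xk k) (lam k) R δ, ‖ψk k x‖ ^ 4) ≤
          ENNReal.ofReal ((C:ℝ) ^ 4 * (ε / S)) := by
        rw [h1]
        refine (pow_le_pow_left' hb 4).trans (le_of_eq ?_)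
        rw [mul_pow, ENNReal.ofReal_mul (by positivity), ENNReal.ofReal_pow C.coe_nonneg,
          ENNReal.ofReal_coe_nnreal, ← ENNReal.ofReal_pow (by positivity)]
        congr 2
        rw [← Real.rpow_natCast, ← Real.rpow_mul (by positivity)]
        norm_num
      exact (ENNReal.ofReal_le_ofReal_iff (by positivity)).1 h2
    calc P * ∫ x in neck (xk k) (lam k) R δ, ‖ψk k x‖ ^ 4 ≤ P * ((C:ℝ) ^ 4 * (ε / S)) := by gcongr
      _ ≤ S * (ε / S) := by
        rw [← mul_assoc]
        gcongr
        rw [hS]; gcongr; linarith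
      _ = ε := by field_simp
end
end
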